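/- Fix γ ∈ (1,2) and Φ_ℓ, Φ_r ∈ ℝ. Let, for each n ≥ 2, Φ_ss^n : Λ_n → ℝ be the unique solution of the discrete stationary equation, and let Φ_ss be the unique weak solution of the stationary fractional Dirichlet problem. Then for every continuous G : [0,1] → ℝ, lim_{n→∞} (1/n) ∑_{x∈Λ_n} G(x/n) Φ_ss^n(x) = ∫_0^1 G(u) Φ_ss(u) du. -/

import Mathlib

open MeasureTheory Filter ENNReal NNReal

noncomputable section

/-- The normalizing constant `c_γ = (∑_{z∈ℤ, z≠0} |z|^{-(1+γ)})⁻¹`. -/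
def cGamma (γ : ℝ) : ℝ := (∑' z : ℤ, if z = 0 then (0:ℝ) else |(z : ℝ)| ^ (-(1 + γ)))⁻¹

/-- The long-range kernel `p(z) = c_γ |z|^{-(1+γ)}` for `z ≠ 0`, `p(0) = 0`. -/
def pker (γ : ℝ) (z : ℝ) : ℝ := if z = 0 then 0 else cGamma γ * |z| ^ (-(1 + γ))

/-- The fractional inner product `⟨F,G⟩_{γ/2}`. -/
def fracInner (γ : ℝ) (F G : ℝ → ℝ) : ℝ :=
  (cGamma γ / 2) * ∫ u in Set.Icc (0:ℝ) 1, ∫ v in Set.Icc (0:ℝ) 1,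
    (F u - F v) * (G u - G v) * |u - v| ^ (-(1 + γ))

/-- The squared fractional seminorm `‖F‖²_{γ/2}`, as an extended real number. -/
def fracSeminormSq (γ : ℝ) (F : ℝ → ℝ) : ℝ≥0∞ :=
  ∫⁻ u in Set.Icc (0:ℝ) 1, ∫⁻ v in Set.Icc (0:ℝ) 1,
    ENNReal.ofReal ((cGamma γ / 2) * (F u - F v) ^ 2 * |u - v| ^ (-(1 + γ)))

/-- The squared `L²` norm on `[0,1]`, as an extended real number. -/
def l2NormSq (F : ℝ → ℝ) : ℝ≥0∞ :=
  ∫⁻ u in Set.Icc (0:ℝ) 1, ENNReal.ofReal ((F u) ^ 2)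

/-- The squared fractional Sobolev norm `‖F‖²_{H^{γ/2}}`. -/
def sobNormSq (γ : ℝ) (F : ℝ → ℝ) : ℝ≥0∞ := l2NormSq F + fracSeminormSq γ F

/-- Membership in the fractional Sobolev space `H^{γ/2}`. -/
def MemHgamma (γ : ℝ) (F : ℝ → ℝ) : Prop := Measurable F ∧ sobNormSq γ F < ⊤

/-- `F` admits a continuous representative on `[0,1]` taking the values `a` at `0` and
`b` at `1`. -/
def HasBoundaryValues (F : ℝ → ℝ) (a b : ℝ) : Prop :=
  ∃ Fc : ℝ → ℝ, ContinuousOn Fc (Set.Icc 0 1) ∧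
    (∀ᵐ u ∂(volume.restrict (Set.Icc (0:ℝ) 1)), F u = Fc u) ∧ Fc 0 = a ∧ Fc 1 = b

/-- The regional fractional Laplacian on `[0,1]`, as a principal-value limit. -/
def HasFracLapAt (γ : ℝ) (F : ℝ → ℝ) (u L : ℝ) : Prop :=
  Tendsto (fun ε : ℝ =>
      cGamma γ * ∫ v in {v : ℝ | v ∈ Set.Icc (0:ℝ) 1 ∧ ε ≤ abs (u - v)},
        (F v - F u) * |v - u| ^ (-(1 + γ)))
    (nhdsWithin (0:ℝ) (Set.Ioi 0)) (nhds L)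

/-- The regional fractional Laplacian `𝕃^γ F(u)` (junk value `0` when the
principal-value limit does not exist). -/
def fracLap (γ : ℝ) (F : ℝ → ℝ) (u : ℝ) : ℝ :=
  open Classical in
  if h : ∃ L, HasFracLapAt γ F u L then h.choose else 0

/-- Smooth real functions with compact support contained in `(0,1)`. -/
def IsSpatialTest (G : ℝ → ℝ) : Prop :=
  ContDiff ℝ (⊤ : ℕ∞) G ∧ ∃ K : Set ℝ, IsCompact K ∧ K ⊆ Set.Ioo 0 1 ∧ Function.support G ⊆ K

/-- Test functions `C¹` in time and `C^∞` in space, with spatial supports contained in a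
fixed compact subset of `(0,1)`. -/
def IsTestCInf (G : ℝ → ℝ → ℝ) : Prop :=
  (∀ u, ContDiff ℝ 1 fun t => G t u) ∧ (∀ t, ContDiff ℝ (⊤ : ℕ∞) fun u => G t u) ∧
  ∃ K : Set ℝ, IsCompact K ∧ K ⊆ Set.Ioo 0 1 ∧ ∀ t, Function.support (G t) ⊆ K

/-- Functions `C¹` in time and `C²` in space, with spatial supports contained in a fixed
compact subset of `(0,1)`. -/
def IsTestC2 (G : ℝ → ℝ → ℝ) : Prop :=
  (∀ u, ContDiff ℝ 1 fun t => G t u) ∧ (∀ t, ContDiff ℝ 2 fun u => G t u) ∧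
  ∃ K : Set ℝ, IsCompact K ∧ K ⊆ Set.Ioo 0 1 ∧ ∀ t, Function.support (G t) ⊆ K

/-- Weak solution of the stationary problem `𝕃^γ Φss = 0` on `[0,1]` with Dirichlet
boundary values `Φl` at `0` and `Φr` at `1`. -/
def IsStationarySolution (γ Φl Φr : ℝ) (Φss : ℝ → ℝ) : Prop :=
  MemHgamma γ Φss ∧ HasBoundaryValues Φss Φl Φr ∧
  ∀ G : ℝ → ℝ, IsSpatialTest G → (∫ u in Set.Icc (0:ℝ) 1, Φss u * fracLap γ G u) = 0

/-- The discrete stationary equation for the profile `ψ` on `Λ_n = {1, …, n−1}`. -/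
def IsDiscreteProfile (γ Φl Φr : ℝ) (n : ℕ) (ψ : ℕ → ℝ) : Prop :=
  ∀ x ∈ Finset.Icc 1 (n - 1),
    (∑ y ∈ Finset.Icc 1 (n - 1), pker γ ((y : ℝ) - (x : ℝ)) * (ψ y - ψ x))
      + (if x = 1 then Φl - ψ 1 else 0) + (if x = n - 1 then Φr - ψ (n - 1) else 0) = 0

/-!
Testing the discrete equation against the profile minus a Lipschitz interpolation of the boundary
data bounds the rescaled discrete energy and the boundary errors uniformly in `n`. Since `γ > 1`, a
discrete Morrey inequality turns the energy bound into a Hölder bound of exponent `(γ - 1) / 2` that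
does not depend on `n`, so every subsequence of the profiles has a further subsequence converging to
a continuous function with the right boundary values. By weak-strong convergence of the Gagliardo
difference quotients of step functions, the limit is orthogonal in the energy form to all test
functions; integrating the regional fractional Laplacian by parts, so is the stationary solution.
Testing the difference of the two with a mollification of its soft thresholding shows that it
vanishes. All subsequential limits thus coincide, and the Riemann sums converge.
-/

open Set Topology

/-! ### The kernel and the unit square -/

lemma cGamma_pos {γ : ℝ} (hγ : 0 < γ) : 0 < cGamma γ := by
  have hsum : Summable fun z : ℤ => if z = 0 then (0 : ℝ) else |(z : ℝ)| ^ (-(1 + γ)) := by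
    refine (Real.summable_abs_int_rpow (b := 1 + γ) (by linarith)).congr fun z => ?_
    split_ifs with hz
    · rw [hz, Int.cast_zero, abs_zero, Real.zero_rpow (by linarith)]
    · rfl
  refine inv_pos.mpr (hsum.tsum_pos (fun z => ?_) 1 (by simp))
  split_ifs <;> positivity

lemma pker_eq {γ : ℝ} (hγ : 0 < γ) (z : ℝ) : pker γ z = cGamma γ * |z| ^ (-(1 + γ)) := by
  unfold pker
  split_ifs with hz
  · rw [hz, abs_zero, Real.zero_rpow (by linarith), mul_zero]
  · rfl

/-- The square root `|z|^{-(1+γ)/2}` of the kernel, up to its constant. Splitting the kernel as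
`halfKernel * halfKernel` lets energies be written as `L²` inner products. Since `0⁻¹ = 0`, it
vanishes at `z = 0` as soon as `γ ≠ -1`. -/
def halfKernel (γ z : ℝ) : ℝ := |z| ^ (-(1 + γ) / 2)

lemma halfKernel_mul_self (γ z : ℝ) : halfKernel γ z * halfKernel γ z = |z| ^ (-(1 + γ)) := by
  rw [halfKernel, ← sq, ← Real.rpow_mul_natCast (abs_nonneg z)]
  congr 1
  push_cast
  ring

lemma halfKernel_nonneg (γ z : ℝ) : 0 ≤ halfKernel γ z := by unfold halfKernel; positivity

@[fun_prop]
lemma measurable_halfKernel (γ : ℝ) : Measurable (halfKernel γ) := by unfold halfKernel; fun_prop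

lemma continuousAt_halfKernel (γ : ℝ) {z : ℝ} (hz : z ≠ 0) : ContinuousAt (halfKernel γ) z :=
  continuous_abs.continuousAt.rpow_const (Or.inl (abs_ne_zero.mpr hz))

lemma abs_mul_halfKernel_le (γ z : ℝ) : |z| * halfKernel γ z ≤ |z| ^ ((1 - γ) / 2) := by
  rcases eq_or_ne z 0 with rfl | hz
  · rw [abs_zero, zero_mul]; positivity
  · refine le_of_eq ?_
    rw [halfKernel]
    nth_rewrite 1 [← Real.rpow_one |z|]
    rw [← Real.rpow_add (abs_pos.mpr hz)]
    congr 1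
    ring

lemma sq_rpow_half (γ z : ℝ) : (|z| ^ ((1 - γ) / 2)) ^ 2 = |z| ^ (1 - γ) := by
  rw [← Real.rpow_mul_natCast (abs_nonneg z)]
  congr 1
  push_cast
  ring

lemma sq_abs_mul_kernel_le (γ z : ℝ) : |z| ^ 2 * |z| ^ (-(1 + γ)) ≤ |z| ^ (1 - γ) := by
  have h := mul_nonneg (abs_nonneg z) (halfKernel_nonneg γ z)
  calc |z| ^ 2 * |z| ^ (-(1 + γ)) = (|z| * halfKernel γ z) ^ 2 := by
        rw [← halfKernel_mul_self]; ring
    _ ≤ (|z| ^ ((1 - γ) / 2)) ^ 2 := by gcongr; exact abs_mul_halfKernel_le γ z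
    _ = |z| ^ (1 - γ) := sq_rpow_half γ z

/-- Lebesgue measure on the unit interval. -/
abbrev unitMeasure : Measure ℝ := volume.restrict (Icc (0 : ℝ) 1)

/-- Lebesgue measure on the unit square. -/
abbrev squareMeasure : Measure (ℝ × ℝ) := unitMeasure.prod unitMeasure

lemma ae_squareMeasure_mem :
    ∀ᵐ p ∂squareMeasure, p.1 ∈ Icc (0 : ℝ) 1 ∧ p.2 ∈ Icc (0 : ℝ) 1 := by
  rw [squareMeasure, Measure.prod_restrict]
  exact ae_restrict_mem (measurableSet_Icc.prod measurableSet_Icc)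

lemma intervalIntegrable_abs_rpow {β : ℝ} (hβ : -1 < β) (a b : ℝ) :
    IntervalIntegrable (fun z : ℝ => |z| ^ β) volume a b := by
  refine intervalIntegrable_of_even (fun z => by rw [abs_neg]) (fun x hx => ?_)
  refine (intervalIntegral.intervalIntegrable_rpow' (a := 0) (b := x) hβ).congr fun z hz => ?_
  rw [uIoc_of_le hx.le] at hz
  rw [abs_of_pos hz.1]

lemma integrable_indicator_abs_rpow {β : ℝ} (hβ : -1 < β) :
    Integrable ((Icc (-1 : ℝ) 1).indicator fun z => |z| ^ β) := by
  rw [integrable_indicator_iff measurableSet_Icc, integrableOn_Icc_iff_integrableOn_Ioc,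
    ← intervalIntegrable_iff_integrableOn_Ioc_of_le (by norm_num)]
  exact intervalIntegrable_abs_rpow hβ _ _

lemma integrable_abs_sub_rpow_right {β u : ℝ} (hβ : -1 < β) (hu : u ∈ Icc (0 : ℝ) 1) :
    Integrable (fun v => |u - v| ^ β) unitMeasure := by
  refine ((integrable_indicator_abs_rpow hβ).comp_sub_left u).restrict.congr ?_
  filter_upwards [ae_restrict_mem measurableSet_Icc] with v hv
  exact indicator_of_mem (mem_Icc.mpr ⟨by linarith [hu.1, hv.2], by linarith [hu.2, hv.1]⟩) _

lemma integrable_abs_sub_rpow {β : ℝ} (hβ : -1 < β) :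
    Integrable (fun p : ℝ × ℝ => |p.1 - p.2| ^ β) squareMeasure := by
  have h := (integrable_const (μ := unitMeasure) (1 : ℝ)).convolution_integrand
    (ContinuousLinearMap.mul ℝ ℝ) (integrable_indicator_abs_rpow hβ)
  refine (h.mono_measure (Measure.prod_mono Measure.restrict_le_self le_rfl)).congr ?_
  filter_upwards [ae_squareMeasure_mem] with p hp
  rw [ContinuousLinearMap.mul_apply', one_mul]
  exact indicator_of_mem
    (mem_Icc.mpr ⟨by linarith [hp.1.1, hp.2.2], by linarith [hp.1.2, hp.2.1]⟩) _

/-- The Gagliardo quotient `(F(u) - F(v)) |u - v|^{-(1+γ)/2}`. Up to the factor `c_γ / 2`, the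
fractional inner product of `F` and `G` is the `L²` inner product of their quotients over the unit
square. -/
def fracGrad (γ : ℝ) (F : ℝ → ℝ) (p : ℝ × ℝ) : ℝ := (F p.1 - F p.2) * halfKernel γ (p.1 - p.2)

@[fun_prop]
lemma measurable_fracGrad (γ : ℝ) {F : ℝ → ℝ} (hF : Measurable F) : Measurable (fracGrad γ F) := by
  unfold fracGrad; fun_prop

lemma fracGrad_mul_fracGrad (γ : ℝ) (F G : ℝ → ℝ) (p : ℝ × ℝ) :
    fracGrad γ F p * fracGrad γ G p
      = (F p.1 - F p.2) * (G p.1 - G p.2) * |p.1 - p.2| ^ (-(1 + γ)) := by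
  rw [← halfKernel_mul_self]; unfold fracGrad; ring

lemma abs_sub_le_of_lipschitzWith {L : ℝ≥0} {F : ℝ → ℝ} (hF : LipschitzWith L F) (x y : ℝ) :
    |F x - F y| ≤ L * |x - y| := by
  simpa only [Real.dist_eq] using hF.dist_le_mul x y

lemma abs_fracGrad_le (γ : ℝ) {L : ℝ≥0} {F : ℝ → ℝ} (hF : LipschitzWith L F) (p : ℝ × ℝ) :
    |fracGrad γ F p| ≤ L * |p.1 - p.2| ^ ((1 - γ) / 2) := by
  rw [fracGrad, abs_mul, abs_of_nonneg (halfKernel_nonneg _ _)]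
  calc |F p.1 - F p.2| * halfKernel γ (p.1 - p.2)
      ≤ L * |p.1 - p.2| * halfKernel γ (p.1 - p.2) := by
        gcongr
        · exact halfKernel_nonneg _ _
        · exact abs_sub_le_of_lipschitzWith hF _ _
    _ ≤ L * |p.1 - p.2| ^ ((1 - γ) / 2) := by
        rw [mul_assoc]; gcongr; exact abs_mul_halfKernel_le _ _

lemma memLp_abs_sub_rpow_half {γ : ℝ} (hγ : γ < 2) :
    MemLp (fun p : ℝ × ℝ => |p.1 - p.2| ^ ((1 - γ) / 2)) 2 squareMeasure := by
  rw [memLp_two_iff_integrable_sq (Measurable.aestronglyMeasurable (by fun_prop))]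
  simp only [sq_rpow_half]
  exact integrable_abs_sub_rpow (by linarith)

lemma memLp_fracGrad_of_lipschitzWith {γ : ℝ} (hγ : γ < 2) {L : ℝ≥0} {F : ℝ → ℝ}
    (hF : LipschitzWith L F) : MemLp (fracGrad γ F) 2 squareMeasure := by
  refine ((memLp_abs_sub_rpow_half hγ).const_mul (L : ℝ)).mono
    (measurable_fracGrad γ hF.continuous.measurable).aestronglyMeasurable (.of_forall fun p => ?_)
  exact (abs_fracGrad_le γ hF p).trans (le_abs_self _)

/-- A function of finite energy which is orthogonal, for the energy form of order `γ / 2`, to all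
test functions: a weak solution of the regional fractional Laplace equation on `(0,1)`, with no
boundary condition. -/
structure IsFracHarmonic (γ : ℝ) (F : ℝ → ℝ) : Prop where
  memLp : MemLp (fracGrad γ F) 2 squareMeasure
  orthogonal : ∀ φ, IsSpatialTest φ → ∫ p, fracGrad γ F p * fracGrad γ φ p ∂squareMeasure = 0

lemma IsFracHarmonic.congr {γ : ℝ} {F G : ℝ → ℝ} (h : EqOn F G (Icc 0 1))
    (hF : IsFracHarmonic γ F) : IsFracHarmonic γ G := by
  have hgrad : fracGrad γ F =ᵐ[squareMeasure] fracGrad γ G := by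
    filter_upwards [ae_squareMeasure_mem] with p hp
    rw [fracGrad, fracGrad, h hp.1, h hp.2]
  refine ⟨hF.memLp.ae_eq hgrad, fun φ hφ => ?_⟩
  rw [← hF.orthogonal φ hφ]
  exact integral_congr_ae (hgrad.mono fun p hp => by simp only [hp])

/-! ### Compactness -/

lemma unifIntegrable_mul_of_dominated {X ι : Type*} [MeasurableSpace X] {μ : Measure X}
    {p q : ℝ≥0∞} [HolderConjugate p q] (hq : q ≠ ∞) {a b : ι → X → ℝ} {g : X → ℝ} {C : ℝ≥0}
    (ha : ∀ i, AEStronglyMeasurable (a i) μ) (hb : ∀ i, AEStronglyMeasurable (b i) μ)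
    (haC : ∀ i, eLpNorm (a i) p μ ≤ C) (hg : MemLp g q μ) (hbg : ∀ i, ∀ᵐ x ∂μ, |b i x| ≤ g x) :
    UnifIntegrable (fun i x => a i x * b i x) 1 μ := by
  intro ε hε
  obtain ⟨δ, hδ, hgδ⟩ := hg.eLpNorm_indicator_le (HolderConjugate.one_le q p) hq
    (show 0 < ε / (C + 1) by positivity)
  refine ⟨δ, hδ, fun i s hs hμs => ?_⟩
  have hbs : eLpNorm (s.indicator (b i)) q μ ≤ ENNReal.ofReal (ε / (C + 1)) := by
    refine (eLpNorm_mono_ae ((hbg i).mono fun x hx => ?_)).trans (hgδ s hs hμs)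
    rw [norm_indicator_eq_indicator_norm, norm_indicator_eq_indicator_norm]
    exact indicator_le_indicator (hx.trans (le_abs_self _))
  calc eLpNorm (s.indicator fun x => a i x * b i x) 1 μ
      = eLpNorm (a i • s.indicator (b i)) 1 μ := by
        congr 1
        exact funext fun x => indicator_mul_right s (a i) (b i)
    _ ≤ eLpNorm (a i) p μ * eLpNorm (s.indicator (b i)) q μ :=
        eLpNorm_smul_le_mul_eLpNorm ((hb i).indicator hs) (ha i)
    _ ≤ C * ENNReal.ofReal (ε / (C + 1)) := by gcongr; exact haC i
    _ = ENNReal.ofReal (C * (ε / (C + 1))) := by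
        rw [ENNReal.ofReal_mul C.coe_nonneg, ENNReal.ofReal_coe_nnreal]
    _ ≤ ENNReal.ofReal ε := by
        refine ENNReal.ofReal_le_ofReal ?_
        rw [mul_div_left_comm]
        exact mul_le_of_le_one_right hε.le ((div_le_one (by positivity)).mpr (by linarith))

lemma tendsto_integral_mul_of_dominated {X : Type*} [MeasurableSpace X] {μ : Measure X}
    [IsFiniteMeasure μ] {p q : ℝ≥0∞} [HolderConjugate p q] (hq : q ≠ ∞) {a b : ℕ → X → ℝ}
    {a' b' g : X → ℝ} {C : ℝ≥0}
    (ha : ∀ n, AEStronglyMeasurable (a n) μ) (hb : ∀ n, AEStronglyMeasurable (b n) μ)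
    (haC : ∀ n, eLpNorm (a n) p μ ≤ C) (hg : MemLp g q μ) (hbg : ∀ n, ∀ᵐ x ∂μ, |b n x| ≤ g x)
    (ha' : ∀ᵐ x ∂μ, Tendsto (fun n => a n x) atTop (𝓝 (a' x)))
    (hb' : ∀ᵐ x ∂μ, Tendsto (fun n => b n x) atTop (𝓝 (b' x))) :
    Tendsto (fun n => ∫ x, a n x * b n x ∂μ) atTop (𝓝 (∫ x, a' x * b' x ∂μ)) := by
  have ha'p : MemLp a' p μ := ⟨aestronglyMeasurable_of_tendsto_ae atTop ha ha',
    (Lp.eLpNorm_le_of_ae_tendsto (.of_forall haC) ha ha').trans_lt coe_lt_top⟩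
  have hb'q : MemLp b' q μ := by
    refine hg.mono (aestronglyMeasurable_of_tendsto_ae atTop hb hb') ?_
    filter_upwards [ae_all_iff.mpr hbg, hb'] with x hx hlim
    exact (le_of_tendsto hlim.abs (.of_forall hx)).trans (le_abs_self _)
  have hbq : ∀ n, MemLp (b n) q μ := fun n =>
    hg.mono (hb n) ((hbg n).mono fun x hx => hx.trans (le_abs_self _))
  have hint : ∀ n, Integrable (fun x => a n x * b n x) μ := fun n =>
    MemLp.integrable_mul ⟨ha n, (haC n).trans_lt coe_lt_top⟩ (hbq n)
  have hint' : Integrable (fun x => a' x * b' x) μ := MemLp.integrable_mul ha'p hb'q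
  refine tendsto_integral_of_L1' _ hint'.1 (.of_forall hint) ?_
  refine tendsto_Lp_finite_of_tendsto_ae le_rfl one_ne_top (fun n => (hint n).1)
    (memLp_one_iff_integrable.mpr hint') (unifIntegrable_mul_of_dominated hq ha hb haC hg hbg) ?_
  filter_upwards [ha', hb'] with x hax hbx
  exact hax.mul hbx

/-- A sequence of functions `fs j` is asymptotically equicontinuous if its moduli of continuity
can be chosen uniformly once `j` is large; the individual functions may be discontinuous. -/
def AsymptoticallyEquicontinuous {X E : Type*} [PseudoMetricSpace X] [PseudoMetricSpace E]
    (fs : ℕ → X → E) : Prop :=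
  ∀ ε > 0, ∃ δ > 0, ∀ᶠ j in atTop, ∀ x y, dist x y < δ → dist (fs j x) (fs j y) < ε

lemma asymptoticallyEquicontinuous_of_abs_sub_le {fs : ℕ → ℝ → ℝ} {r : ℕ → ℝ} {K α : ℝ}
    (hα : 0 < α) (hK : 0 ≤ K) (hr : ∀ j, 0 ≤ r j) (hr0 : Tendsto r atTop (𝓝 0))
    (h : ∀ j u v, |fs j u - fs j v| ≤ K * (|u - v| + r j) ^ α) :
    AsymptoticallyEquicontinuous fs := by
  intro ε hε
  have hlim : Tendsto (fun c : ℝ => K * c ^ α) (𝓝 0) (𝓝 0) := by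
    have h0 := (tendsto_id (x := 𝓝 (0 : ℝ))).rpow_const (Or.inr hα.le) |>.const_mul K
    rwa [Real.zero_rpow hα.ne', mul_zero] at h0
  obtain ⟨δ, hδ, hball⟩ := Metric.eventually_nhds_iff.mp (hlim.eventually_lt_const hε)
  refine ⟨δ / 2, half_pos hδ, (hr0.eventually_lt_const (half_pos hδ)).mono fun j hj u v huv => ?_⟩
  rw [Real.dist_eq] at huv ⊢
  have hsum : dist (δ / 2 + r j) 0 < δ := by
    rw [Real.dist_0_eq_abs, abs_of_nonneg (by linarith [hr j])]
    linarith
  calc |fs j u - fs j v| ≤ K * (|u - v| + r j) ^ α := h j u v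
    _ ≤ K * (δ / 2 + r j) ^ α := by
        have := hr j
        gcongr
    _ < ε := hball hsum

lemma AsymptoticallyEquicontinuous.cauchySeq {X E : Type*} [PseudoMetricSpace X]
    [PseudoMetricSpace E] {fs : ℕ → X → E} (h : AsymptoticallyEquicontinuous fs) {s : Set X}
    (hs : Dense s) (hcauchy : ∀ x ∈ s, CauchySeq fun j => fs j x) (x : X) :
    CauchySeq fun j => fs j x := by
  rw [Metric.cauchySeq_iff']
  intro ε hε
  obtain ⟨δ, hδ, hequi⟩ := h (ε / 3) (by linarith)
  obtain ⟨y, hys, hxy⟩ := hs.exists_dist_lt x hδ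
  obtain ⟨N₁, hN₁⟩ := eventually_atTop.mp hequi
  obtain ⟨N₂, hN₂⟩ := Metric.cauchySeq_iff.mp (hcauchy y hys) (ε / 3) (by linarith)
  refine ⟨max N₁ N₂, fun j hj => ?_⟩
  have h₁ := hN₁ j (le_of_max_le_left hj) x y hxy
  have h₂ := hN₂ j (le_of_max_le_right hj) _ (le_max_right N₁ N₂)
  have h₃ := hN₁ _ (le_max_left N₁ N₂) y x (by rwa [dist_comm])
  linarith [dist_triangle4 (fs j x) (fs j y) (fs (max N₁ N₂) y) (fs (max N₁ N₂) x)]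

lemma AsymptoticallyEquicontinuous.uniformContinuous_of_tendsto {X E : Type*}
    [PseudoMetricSpace X] [PseudoMetricSpace E] {fs : ℕ → X → E} {f : X → E}
    (h : AsymptoticallyEquicontinuous fs) (hf : ∀ x, Tendsto (fun j => fs j x) atTop (𝓝 (f x))) :
    UniformContinuous f := by
  rw [Metric.uniformContinuous_iff]
  intro ε hε
  obtain ⟨δ, hδ, hequi⟩ := h (ε / 2) (half_pos hε)
  refine ⟨δ, hδ, fun {x y} hxy => ?_⟩
  exact (le_of_tendsto ((hf x).dist (hf y)) (hequi.mono fun j hj => (hj x y hxy).le)).trans_lt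
    (half_lt_self hε)

lemma AsymptoticallyEquicontinuous.comp {X E : Type*} [PseudoMetricSpace X]
    [PseudoMetricSpace E] {fs : ℕ → X → E} (h : AsymptoticallyEquicontinuous fs) {θ : ℕ → ℕ}
    (hθ : Tendsto θ atTop atTop) : AsymptoticallyEquicontinuous fun j => fs (θ j) := fun ε hε =>
  (h ε hε).imp fun _ ⟨hδ, hequi⟩ => ⟨hδ, hθ.eventually hequi⟩

lemma AsymptoticallyEquicontinuous.exists_subseq_tendsto {X E : Type*} [PseudoMetricSpace X]
    [TopologicalSpace.SeparableSpace X] [PseudoMetricSpace E] {fs : ℕ → X → E}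
    (h : AsymptoticallyEquicontinuous fs) {K : Set E} (hK : IsCompact K)
    (hfs : ∀ j x, fs j x ∈ K) :
    ∃ θ : ℕ → ℕ, StrictMono θ ∧ ∃ f : X → E, UniformContinuous f ∧
      ∀ x, Tendsto (fun j => fs (θ j) x) atTop (𝓝 (f x)) := by
  obtain ⟨s, hs_count, hs_dense⟩ :=
    TopologicalSpace.exists_countable_dense X
  have := hs_count.to_subtype
  obtain ⟨f₀, -, θ, hθ, hlim⟩ := (isCompact_univ_pi fun _ : s => hK).tendsto_subseq
    (x := fun j (x : s) => fs j x) fun j x _ => hfs j x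
  rw [tendsto_pi_nhds] at hlim
  have hequi := h.comp hθ.tendsto_atTop
  have hcauchy := hequi.cauchySeq hs_dense fun x hx => (hlim ⟨x, hx⟩).cauchySeq
  choose f _ hf using fun x => cauchySeq_tendsto_of_isComplete hK.isComplete
    (fun j => hfs (θ j) x) (hcauchy x)
  exact ⟨θ, hθ, f, hequi.uniformContinuous_of_tendsto hf, hf⟩

/-! ### Test functions -/

lemma exists_subset_Icc_of_isCompact {K : Set ℝ} (hK : IsCompact K) (hK01 : K ⊆ Ioo 0 1) :
    ∃ η > 0, K ⊆ Icc η (1 - η) := by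
  obtain ⟨η, hη, hthick⟩ := hK.exists_cthickening_subset_open isOpen_Ioo hK01
  refine ⟨η, hη, fun x hx => ?_⟩
  have hmem : ∀ y, dist y x ≤ η → y ∈ Ioo (0 : ℝ) 1 := fun y hy =>
    hthick (Metric.mem_cthickening_of_dist_le y x η K hx hy)
  have hleft := hmem (x - η) (by simp [abs_of_pos hη])
  have hright := hmem (x + η) (by simp [abs_of_pos hη])
  exact ⟨by linarith [hleft.1], by linarith [hright.2]⟩

namespace IsSpatialTest

variable {φ : ℝ → ℝ}

lemma hasCompactSupport (hφ : IsSpatialTest φ) : HasCompactSupport φ := by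
  obtain ⟨-, K, hK, -, hsupp⟩ := hφ
  exact hK.of_isClosed_subset (isClosed_tsupport φ) (closure_minimal hsupp hK.isClosed)

lemma exists_tsupport_subset_Icc (hφ : IsSpatialTest φ) :
    ∃ η > 0, tsupport φ ⊆ Icc η (1 - η) := by
  obtain ⟨-, K, hK, hK01, hsupp⟩ := hφ
  obtain ⟨η, hη, hKη⟩ := exists_subset_Icc_of_isCompact hK hK01
  exact ⟨η, hη, (closure_minimal hsupp hK.isClosed).trans hKη⟩

lemma contDiff_deriv (hφ : IsSpatialTest φ) : ContDiff ℝ (⊤ : ℕ∞) (deriv φ) :=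
  (contDiff_infty_iff_deriv.mp hφ.1).2

lemma exists_lipschitzWith (hφ : IsSpatialTest φ) : ∃ L, LipschitzWith L φ :=
  ContDiff.lipschitzWith_of_hasCompactSupport hφ.hasCompactSupport hφ.1 (by simp)

lemma exists_lipschitzWith_deriv (hφ : IsSpatialTest φ) : ∃ L, LipschitzWith L (deriv φ) :=
  ContDiff.lipschitzWith_of_hasCompactSupport hφ.hasCompactSupport.deriv hφ.contDiff_deriv
    (by simp)

end IsSpatialTest

lemma abs_sub_sub_deriv_mul_le {f : ℝ → ℝ} {C : ℝ≥0} (hf : Differentiable ℝ f)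
    (hf' : LipschitzWith C (deriv f)) (u v : ℝ) :
    |f v - f u - deriv f u * (v - u)| ≤ C * |v - u| ^ 2 := by
  have hderiv : ∀ x ∈ uIcc u v, HasDerivWithinAt (fun t => f t - deriv f u * t)
      (deriv f x - deriv f u) (uIcc u v) x := fun x _ => by
    have h := (hf x).hasDerivAt.sub ((hasDerivAt_id x).const_mul (deriv f u))
    rw [mul_one] at h
    exact h.hasDerivWithinAt
  have hbound : ∀ x ∈ uIcc u v, ‖deriv f x - deriv f u‖ ≤ C * |v - u| := fun x hx =>
    (abs_sub_le_of_lipschitzWith hf' x u).trans <|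
      mul_le_mul_of_nonneg_left (abs_sub_left_of_mem_uIcc hx) C.coe_nonneg
  have h := (convex_uIcc u v).norm_image_sub_le_of_norm_hasDerivWithin_le hderiv hbound
    left_mem_uIcc right_mem_uIcc
  rw [Real.norm_eq_abs, Real.norm_eq_abs, mul_assoc, ← sq] at h
  convert h using 2
  ring

/-! ### Integration by parts for the regional fractional Laplacian -/

/-- The kernel `|z|^{-(1+γ)}` cut off near the origin, as in the principal value defining the
regional fractional Laplacian. -/
def truncKernel (γ ε z : ℝ) : ℝ := if ε ≤ |z| then |z| ^ (-(1 + γ)) else 0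

@[fun_prop]
lemma measurable_truncKernel (γ ε : ℝ) : Measurable (truncKernel γ ε) := by
  unfold truncKernel
  exact Measurable.ite (measurableSet_le (by fun_prop) (by fun_prop)) (by fun_prop) (by fun_prop)

lemma truncKernel_neg (γ ε z : ℝ) : truncKernel γ ε (-z) = truncKernel γ ε z := by
  rw [truncKernel, truncKernel, abs_neg]

lemma abs_truncKernel_le (γ ε z : ℝ) : |truncKernel γ ε z| ≤ |z| ^ (-(1 + γ)) := by
  unfold truncKernel
  split_ifs
  · exact (abs_of_nonneg (by positivity)).le
  · rw [abs_zero]; positivity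

lemma abs_truncKernel_le_rpow {γ ε : ℝ} (hγ : 0 < γ) (hε : 0 < ε) (z : ℝ) :
    |truncKernel γ ε z| ≤ ε ^ (-(1 + γ)) := by
  unfold truncKernel
  split_ifs with h
  · rw [abs_of_nonneg (by positivity)]
    exact Real.rpow_le_rpow_of_nonpos hε h (by linarith)
  · rw [abs_zero]; positivity

lemma truncKernel_eventuallyEq {γ : ℝ} (hγ : 0 < γ) (z : ℝ) :
    ∀ᶠ ε in 𝓝[>] 0, truncKernel γ ε z = |z| ^ (-(1 + γ)) := by
  rcases eq_or_ne z 0 with rfl | hz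
  · filter_upwards with ε
    rw [truncKernel, abs_zero, Real.zero_rpow (by linarith), ite_self]
  · filter_upwards [mem_nhdsWithin_of_mem_nhds (Iio_mem_nhds (abs_pos.mpr hz))] with ε hε
    exact if_pos (le_of_lt hε)

lemma abs_mul_truncKernel_le (γ ε a z : ℝ) :
    |a * truncKernel γ ε z| ≤ |a * |z| ^ (-(1 + γ))| := by
  rw [abs_mul, abs_mul, abs_of_nonneg (Real.rpow_nonneg (abs_nonneg z) _)]
  gcongr
  exact abs_truncKernel_le γ ε z

section Truncation

variable {X : Type*} [MeasurableSpace X] {μ : Measure X} {γ : ℝ} {f z : X → ℝ}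

lemma integrable_mul_truncKernel (hf : Measurable f) (hz : Measurable z)
    (h : Integrable (fun x => f x * |z x| ^ (-(1 + γ))) μ) (ε : ℝ) :
    Integrable (fun x => f x * truncKernel γ ε (z x)) μ :=
  h.mono (Measurable.aestronglyMeasurable (by fun_prop))
    (.of_forall fun x => abs_mul_truncKernel_le γ ε (f x) (z x))

lemma tendsto_integral_mul_truncKernel (hγ : 0 < γ) (hf : Measurable f) (hz : Measurable z)
    (h : Integrable (fun x => f x * |z x| ^ (-(1 + γ))) μ) :
    Tendsto (fun ε => ∫ x, f x * truncKernel γ ε (z x) ∂μ) (𝓝[>] 0)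
      (𝓝 (∫ x, f x * |z x| ^ (-(1 + γ)) ∂μ)) := by
  refine tendsto_integral_filter_of_dominated_convergence _
    (.of_forall fun ε => (integrable_mul_truncKernel hf hz h ε).1)
    (.of_forall fun ε => .of_forall fun x => abs_mul_truncKernel_le γ ε (f x) (z x)) h.norm
    (.of_forall fun x => Tendsto.const_mul _ ?_)
  exact tendsto_nhds_of_eventually_eq (truncKernel_eventuallyEq hγ (z x))

end Truncation

/-- The increment `φ(v) - φ(u)`, minus its linear part when `v` is `η`-close to `u`. The linear
part is odd about `u`, so it does not contribute to principal values at points `u` whose distance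
to the boundary is at least `η`; what remains is of second order. -/
def compensatedDiff (φ : ℝ → ℝ) (η u v : ℝ) : ℝ :=
  φ v - φ u - deriv φ u * (if |v - u| < η then v - u else 0)

lemma measurable_compensatedDiff {φ : ℝ → ℝ} (hφ : Measurable φ) (η : ℝ) :
    Measurable fun p : ℝ × ℝ => compensatedDiff φ η p.1 p.2 := by
  have := measurable_deriv φ
  refine Measurable.sub (by fun_prop) (Measurable.mul (by fun_prop) ?_)
  exact Measurable.ite (measurableSet_lt (by fun_prop) (by fun_prop)) (by fun_prop) (by fun_prop)

lemma IsSpatialTest.exists_abs_compensatedDiff_le {φ : ℝ → ℝ} (hφ : IsSpatialTest φ) {η : ℝ}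
    (hη : 0 < η) : ∃ C ≥ 0, ∀ u v, |compensatedDiff φ η u v| ≤ C * |u - v| ^ 2 := by
  obtain ⟨L, hL⟩ := hφ.exists_lipschitzWith
  obtain ⟨L', hL'⟩ := hφ.exists_lipschitzWith_deriv
  refine ⟨max (L' : ℝ) (L / η), by positivity, fun u v => ?_⟩
  rw [abs_sub_comm u v]
  unfold compensatedDiff
  split_ifs with huv
  · refine (abs_sub_sub_deriv_mul_le (hφ.1.differentiable (by simp)) hL' u v).trans ?_
    gcongr
    exact le_max_left _ _
  · rw [mul_zero, sub_zero]
    calc |φ v - φ u| ≤ L * |v - u| := abs_sub_le_of_lipschitzWith hL v u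
      _ = L / η * (η * |v - u|) := by field_simp
      _ ≤ L / η * |v - u| ^ 2 := by rw [sq]; gcongr; exact not_lt.mp huv
      _ ≤ max (L' : ℝ) (L / η) * |v - u| ^ 2 := by gcongr; exact le_max_right _ _

lemma abs_compensatedDiff_mul_kernel_le (γ : ℝ) {φ : ℝ → ℝ} {η C : ℝ} (hC : 0 ≤ C)
    (hφ : ∀ u v, |compensatedDiff φ η u v| ≤ C * |u - v| ^ 2) (u v : ℝ) :
    |compensatedDiff φ η u v * |u - v| ^ (-(1 + γ))| ≤ C * |u - v| ^ (1 - γ) := by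
  rw [abs_mul, abs_of_nonneg (Real.rpow_nonneg (abs_nonneg (u - v)) _)]
  calc |compensatedDiff φ η u v| * |u - v| ^ (-(1 + γ))
      ≤ C * |u - v| ^ 2 * |u - v| ^ (-(1 + γ)) := by gcongr; exact hφ u v
    _ ≤ C * |u - v| ^ (1 - γ) := by rw [mul_assoc]; gcongr; exact sq_abs_mul_kernel_le γ _

lemma integral_linear_part_mul_truncKernel_eq_zero (γ ε : ℝ) {η u : ℝ}
    (hu : u ∈ Icc η (1 - η)) :
    ∫ v, (if |v - u| < η then v - u else 0) * truncKernel γ ε (u - v) ∂unitMeasure = 0 := by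
  set g : ℝ → ℝ := fun z => (if |z| < η then z else 0) * truncKernel γ ε z with hg
  have hindicator : (Icc (0 : ℝ) 1).indicator
      (fun v => (if |v - u| < η then v - u else 0) * truncKernel γ ε (u - v))
        = fun v => g (v - u) := by
    ext v
    have hsymm : truncKernel γ ε (u - v) = truncKernel γ ε (v - u) := by
      rw [← neg_sub v u, truncKernel_neg]
    by_cases hv : v ∈ Icc (0 : ℝ) 1
    · rw [indicator_of_mem hv, hsymm]
    · rw [indicator_of_notMem hv, hg]
      refine (mul_eq_zero_of_left (if_neg fun habs => hv ?_) _).symm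
      rw [abs_lt] at habs
      exact ⟨by linarith [hu.1, habs.1], by linarith [hu.2, habs.2]⟩
  have hodd : ∀ z, g (-z) = -g z := fun z => by
    simp only [hg, truncKernel_neg, abs_neg]
    split_ifs <;> ring
  have hneg := integral_neg_eq_self g volume
  simp only [hodd, integral_neg] at hneg
  rw [← integral_indicator measurableSet_Icc, hindicator, integral_sub_right_eq_self g u]
  linarith

lemma integral_sub_mul_truncKernel {γ ε η : ℝ} (hγ : 0 < γ) (hε : 0 < ε) {φ : ℝ → ℝ}
    (hφ : Continuous φ) (hη : tsupport φ ⊆ Icc η (1 - η)) (u : ℝ) :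
    ∫ v, (φ v - φ u) * truncKernel γ ε (u - v) ∂unitMeasure
      = ∫ v, compensatedDiff φ η u v * truncKernel γ ε (u - v) ∂unitMeasure := by
  have hint : ∀ f : ℝ → ℝ, Integrable f unitMeasure →
      Integrable (fun v => f v * truncKernel γ ε (u - v)) unitMeasure := fun f hf =>
    hf.mul_bdd (c := ε ^ (-(1 + γ))) (Measurable.aestronglyMeasurable (by fun_prop))
      (.of_forall fun v => abs_truncKernel_le_rpow hγ hε (u - v))
  have hlinear : Integrable (fun v => if |v - u| < η then v - u else 0) unitMeasure :=
    Integrable.indicator (s := {v | |v - u| < η})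
      (Continuous.integrableOn_Icc (f := fun v => v - u) (by fun_prop))
      (measurableSet_lt (by fun_prop) (by fun_prop))
  have hzero : deriv φ u *
      ∫ v, (if |v - u| < η then v - u else 0) * truncKernel γ ε (u - v) ∂unitMeasure = 0 := by
    by_cases hu : u ∈ Icc η (1 - η)
    · rw [integral_linear_part_mul_truncKernel_eq_zero γ ε hu, mul_zero]
    · rw [Function.notMem_support.mp fun h => hu (hη (support_deriv_subset h)), zero_mul]
  simp only [compensatedDiff, sub_mul _ (deriv φ u * _), mul_assoc]
  rw [integral_sub (hint _ (Continuous.integrableOn_Icc (by fun_prop)))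
    ((hint _ hlinear).const_mul _), integral_const_mul, hzero, sub_zero]

lemma fracLap_eq {γ : ℝ} {F : ℝ → ℝ} {u L : ℝ} (h : HasFracLapAt γ F u L) : fracLap γ F u = L := by
  have hex : ∃ L, HasFracLapAt γ F u L := ⟨L, h⟩
  rw [fracLap, dif_pos hex]
  exact tendsto_nhds_unique hex.choose_spec h

lemma hasFracLapAt_iff (γ : ℝ) (F : ℝ → ℝ) (u L : ℝ) :
    HasFracLapAt γ F u L ↔ Tendsto
      (fun ε => cGamma γ * ∫ v, (F v - F u) * truncKernel γ ε (u - v) ∂unitMeasure)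
      (𝓝[>] 0) (𝓝 L) := by
  unfold HasFracLapAt
  refine iff_of_eq (congrArg (Tendsto · _ _) (funext fun ε => congrArg _ ?_))
  change ∫ v in Icc (0 : ℝ) 1 ∩ {v | ε ≤ |u - v|}, (F v - F u) * |v - u| ^ (-(1 + γ)) = _
  rw [← setIntegral_indicator (measurableSet_le (by fun_prop) (by fun_prop))]
  congr with v
  simp only [indicator_apply, mem_ofPred_eq, truncKernel, mul_ite, mul_zero, abs_sub_comm v u]

section IntegrationByParts

variable {γ η C : ℝ} {φ F : ℝ → ℝ}

lemma integrable_compensatedDiff_mul_kernel_right (hγ : γ < 2) (hφ : Measurable φ) (hC : 0 ≤ C)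
    (hbound : ∀ u v, |compensatedDiff φ η u v| ≤ C * |u - v| ^ 2) {u : ℝ}
    (hu : u ∈ Icc (0 : ℝ) 1) :
    Integrable (fun v => compensatedDiff φ η u v * |u - v| ^ (-(1 + γ))) unitMeasure := by
  have hm := (measurable_compensatedDiff hφ η).comp (measurable_prodMk_left (x := u))
  exact ((integrable_abs_sub_rpow_right (by linarith) hu).const_mul C).mono'
    (hm.mul (by fun_prop)).aestronglyMeasurable
    (.of_forall fun v => abs_compensatedDiff_mul_kernel_le γ hC hbound u v)

lemma integrable_compensatedDiff_mul_kernel (hγ : γ < 2) (hφ : Measurable φ) (hC : 0 ≤ C)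
    (hbound : ∀ u v, |compensatedDiff φ η u v| ≤ C * |u - v| ^ 2) :
    Integrable (fun p : ℝ × ℝ => compensatedDiff φ η p.1 p.2 * |p.1 - p.2| ^ (-(1 + γ)))
      squareMeasure :=
  ((integrable_abs_sub_rpow (by linarith)).const_mul C).mono'
    ((measurable_compensatedDiff hφ η).mul (by fun_prop)).aestronglyMeasurable
    (.of_forall fun p => abs_compensatedDiff_mul_kernel_le γ hC hbound p.1 p.2)

lemma fracLap_eq_integral_compensatedDiff (hγ0 : 0 < γ) (hγ2 : γ < 2) (hφ : Continuous φ)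
    (hη : tsupport φ ⊆ Icc η (1 - η)) (hC : 0 ≤ C)
    (hbound : ∀ u v, |compensatedDiff φ η u v| ≤ C * |u - v| ^ 2) {u : ℝ}
    (hu : u ∈ Icc (0 : ℝ) 1) :
    fracLap γ φ u
      = cGamma γ * ∫ v, compensatedDiff φ η u v * |u - v| ^ (-(1 + γ)) ∂unitMeasure := by
  refine fracLap_eq ((hasFracLapAt_iff γ φ u _).mpr (Tendsto.const_mul _ ?_))
  have hlim := tendsto_integral_mul_truncKernel hγ0
    ((measurable_compensatedDiff hφ.measurable η).comp (measurable_prodMk_left (x := u)))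
    (measurable_const.sub measurable_id)
    (integrable_compensatedDiff_mul_kernel_right hγ2 hφ.measurable hC hbound hu)
  refine hlim.congr' ?_
  filter_upwards [self_mem_nhdsWithin] with ε hε
  exact (integral_sub_mul_truncKernel hγ0 hε hφ hη u).symm

lemma integral_sub_mul_sub_mul_truncKernel (γ : ℝ) {ε : ℝ}
    (hint : Integrable (fun p : ℝ × ℝ => F p.1 * ((φ p.2 - φ p.1) * truncKernel γ ε (p.1 - p.2)))
      squareMeasure) :
    ∫ p : ℝ × ℝ, (F p.1 - F p.2) * (φ p.1 - φ p.2) * truncKernel γ ε (p.1 - p.2) ∂squareMeasure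
      = -2 * ∫ p : ℝ × ℝ, F p.1 * ((φ p.2 - φ p.1) * truncKernel γ ε (p.1 - p.2))
          ∂squareMeasure := by
  set H : ℝ × ℝ → ℝ := fun p => F p.1 * ((φ p.2 - φ p.1) * truncKernel γ ε (p.1 - p.2)) with hH
  have hsplit : ∀ p : ℝ × ℝ, (F p.1 - F p.2) * (φ p.1 - φ p.2) * truncKernel γ ε (p.1 - p.2)
      = -(H p + H p.swap) := fun p => by
    simp only [hH, Prod.fst_swap, Prod.snd_swap]
    rw [← truncKernel_neg γ ε (p.2 - p.1), neg_sub]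
    ring
  have hswap : Integrable (fun p => H p.swap) squareMeasure := hint.swap
  simp only [hsplit]
  rw [integral_neg, integral_add hint hswap, integral_prod_swap]
  ring

lemma integral_mul_sub_mul_truncKernel {ε : ℝ} (hγ0 : 0 < γ) (hγ2 : γ < 2) (hε : 0 < ε)
    (hφ : Continuous φ) (hη : tsupport φ ⊆ Icc η (1 - η)) (hC : 0 ≤ C)
    (hbound : ∀ u v, |compensatedDiff φ η u v| ≤ C * |u - v| ^ 2)
    (hF : Measurable F) {M : ℝ} (hM : ∀ u, |F u| ≤ M) :
    ∫ p : ℝ × ℝ, (F p.1 - F p.2) * (φ p.1 - φ p.2) * truncKernel γ ε (p.1 - p.2) ∂squareMeasure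
      = -2 * ∫ p : ℝ × ℝ, F p.1 * (compensatedDiff φ η p.1 p.2 * truncKernel γ ε (p.1 - p.2))
          ∂squareMeasure := by
  have hFint : ∀ f : ℝ × ℝ → ℝ, Integrable f squareMeasure →
      Integrable (fun p => F p.1 * f p) squareMeasure := fun f hf =>
    hf.bdd_mul (Measurable.aestronglyMeasurable (by fun_prop)) (.of_forall fun p => hM p.1)
  have hφint : Integrable φ unitMeasure := hφ.integrableOn_Icc
  have hint₁ := hFint _ (((hφint.comp_snd unitMeasure).sub (hφint.comp_fst unitMeasure)).mul_bdd
    (c := ε ^ (-(1 + γ))) (g := fun p : ℝ × ℝ => truncKernel γ ε (p.1 - p.2))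
    (Measurable.aestronglyMeasurable (by fun_prop))
    (.of_forall fun p => abs_truncKernel_le_rpow hγ0 hε _))
  have hint₂ := hFint _ (integrable_mul_truncKernel (z := fun p : ℝ × ℝ => p.1 - p.2)
    (measurable_compensatedDiff hφ.measurable η) (by fun_prop)
    (integrable_compensatedDiff_mul_kernel hγ2 hφ.measurable hC hbound) ε)
  rw [integral_sub_mul_sub_mul_truncKernel γ hint₁]
  congr 1
  refine (integral_prod _ hint₁).trans (Eq.trans ?_ (integral_prod _ hint₂).symm)
  congr with u
  simp only [Pi.sub_apply, integral_const_mul]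
  rw [integral_sub_mul_truncKernel hγ0 hε hφ hη u]

theorem integral_mul_fracLap (hγ0 : 0 < γ) (hγ2 : γ < 2) (hF : Measurable F) {M : ℝ}
    (hM : ∀ u, |F u| ≤ M) (hE : MemLp (fracGrad γ F) 2 squareMeasure) (hφ : IsSpatialTest φ) :
    ∫ u, F u * fracLap γ φ u ∂unitMeasure
      = -(cGamma γ / 2) * ∫ p, fracGrad γ F p * fracGrad γ φ p ∂squareMeasure := by
  obtain ⟨η, hη, hsupp⟩ := hφ.exists_tsupport_subset_Icc
  obtain ⟨C, hC, hbound⟩ := hφ.exists_abs_compensatedDiff_le hη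
  obtain ⟨L, hL⟩ := hφ.exists_lipschitzWith
  have hφm := hL.continuous.measurable
  have hcm := measurable_compensatedDiff hφm η
  have hint : Integrable (fun p : ℝ × ℝ =>
      F p.1 * compensatedDiff φ η p.1 p.2 * |p.1 - p.2| ^ (-(1 + γ))) squareMeasure := by
    simp only [mul_assoc]
    exact (integrable_compensatedDiff_mul_kernel hγ2 hφm hC hbound).bdd_mul
      (Measurable.aestronglyMeasurable (by fun_prop)) (.of_forall fun p => hM p.1)
  have hgrad : Integrable (fun p : ℝ × ℝ =>
      (F p.1 - F p.2) * (φ p.1 - φ p.2) * |p.1 - p.2| ^ (-(1 + γ))) squareMeasure := by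
    simp only [← fracGrad_mul_fracGrad]
    exact MemLp.integrable_mul hE (memLp_fracGrad_of_lipschitzWith hγ2 hL)
  have hlap : ∫ u, F u * fracLap γ φ u ∂unitMeasure = cGamma γ * ∫ p : ℝ × ℝ,
      F p.1 * compensatedDiff φ η p.1 p.2 * |p.1 - p.2| ^ (-(1 + γ)) ∂squareMeasure := by
    rw [integral_prod _ hint, ← integral_const_mul]
    refine setIntegral_congr_fun measurableSet_Icc fun u hu => ?_
    simp only [mul_assoc, integral_const_mul]
    rw [fracLap_eq_integral_compensatedDiff hγ0 hγ2 hL.continuous hsupp hC hbound hu]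
    ring
  have hlim : Tendsto (fun ε => -2 * ∫ p : ℝ × ℝ,
      F p.1 * compensatedDiff φ η p.1 p.2 * truncKernel γ ε (p.1 - p.2) ∂squareMeasure) (𝓝[>] 0)
      (𝓝 (∫ p, fracGrad γ F p * fracGrad γ φ p ∂squareMeasure)) := by
    simp only [fracGrad_mul_fracGrad]
    refine (tendsto_integral_mul_truncKernel hγ0 (by fun_prop) (by fun_prop) hgrad).congr' ?_
    filter_upwards [self_mem_nhdsWithin] with ε hε
    simpa only [mul_assoc] using integral_mul_sub_mul_truncKernel hγ0 hγ2 hε hL.continuous hsupp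
      hC hbound hF hM
  have hlim' := tendsto_integral_mul_truncKernel hγ0
    (f := fun p : ℝ × ℝ => F p.1 * compensatedDiff φ η p.1 p.2) (by fun_prop) (by fun_prop) hint
  rw [hlap, tendsto_nhds_unique hlim (hlim'.const_mul (-2))]
  ring

end IntegrationByParts

/-! ### Mollification -/

lemma enorm_integral_rpow_le {X E : Type*} [MeasurableSpace X] [NormedAddCommGroup E]
    [NormedSpace ℝ E] {ν : Measure X} [IsProbabilityMeasure ν] {f : X → E} {q : ℝ≥0∞}
    (hq1 : 1 ≤ q) (hq : q ≠ ∞) (hf : AEStronglyMeasurable f ν) :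
    ‖∫ x, f x ∂ν‖ₑ ^ q.toReal ≤ ∫⁻ x, ‖f x‖ₑ ^ q.toReal ∂ν := by
  have hq0 : 0 < q.toReal := toReal_pos (zero_lt_one.trans_le hq1).ne' hq
  have h : ‖∫ x, f x ∂ν‖ₑ ≤ eLpNorm f q ν := calc
    ‖∫ x, f x ∂ν‖ₑ ≤ eLpNorm f 1 ν := by
      rw [eLpNorm_one_eq_lintegral_enorm]; exact enorm_integral_le_lintegral_enorm f
    _ ≤ eLpNorm f q ν := eLpNorm_le_eLpNorm_of_exponent_le hq1 hf
  rw [eLpNorm_eq_lintegral_rpow_enorm_toReal (zero_lt_one.trans_le hq1).ne' hq] at h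
  simpa only [one_div, ENNReal.rpow_inv_rpow hq0.ne'] using ENNReal.rpow_le_rpow h hq0.le

lemma setLIntegral_comp_sub_le {G : Type*} [AddGroup G] [MeasurableSpace G] [MeasurableAdd G]
    {μ : Measure G} [μ.IsAddRightInvariant] {S T : Set G} (hS : MeasurableSet S)
    (hT : MeasurableSet T) (f : G → ℝ≥0∞) {t : G} (hST : ∀ x ∈ S, x - t ∈ T) :
    ∫⁻ x in S, f (x - t) ∂μ ≤ ∫⁻ x in T, f x ∂μ := by
  rw [← lintegral_indicator hS, ← lintegral_indicator hT,
    ← lintegral_sub_right_eq_self (T.indicator f) t]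
  refine lintegral_mono (indicator_le fun x hx => ?_)
  rw [indicator_of_mem (hST x hx)]

lemma eLpNorm_integral_comp_sub_le {G E : Type*} [AddGroup G] [MeasurableSpace G]
    [MeasurableAdd G] [MeasurableSub₂ G] [NormedAddCommGroup E] [NormedSpace ℝ E]
    {μ ν : Measure G} [SFinite μ]
    [μ.IsAddRightInvariant] [IsProbabilityMeasure ν] {q : ℝ≥0∞} (hq1 : 1 ≤ q) (hq : q ≠ ∞)
    {S T : Set G} (hS : MeasurableSet S) (hT : MeasurableSet T) {H : G → E}
    (hH : StronglyMeasurable H) (hST : ∀ᵐ t ∂ν, ∀ x ∈ S, x - t ∈ T) :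
    eLpNorm (fun x => ∫ t, H (x - t) ∂ν) q (μ.restrict S) ≤ eLpNorm H q (μ.restrict T) := by
  have hq0 := (zero_lt_one.trans_le hq1).ne'
  rw [eLpNorm_eq_lintegral_rpow_enorm_toReal hq0 hq, eLpNorm_eq_lintegral_rpow_enorm_toReal hq0 hq]
  refine ENNReal.rpow_le_rpow ?_ (by positivity)
  have hm : StronglyMeasurable fun p : G × G => H (p.1 - p.2) :=
    hH.comp_measurable measurable_sub
  calc ∫⁻ x in S, ‖∫ t, H (x - t) ∂ν‖ₑ ^ q.toReal ∂μ
      ≤ ∫⁻ x in S, ∫⁻ t, ‖H (x - t)‖ₑ ^ q.toReal ∂ν ∂μ := lintegral_mono fun x =>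
        enorm_integral_rpow_le hq1 hq
          (hm.comp_measurable measurable_prodMk_left).aestronglyMeasurable
    _ = ∫⁻ t, ∫⁻ x in S, ‖H (x - t)‖ₑ ^ q.toReal ∂μ ∂ν :=
        lintegral_lintegral_swap (hm.enorm.pow_const _).aemeasurable
    _ ≤ ∫⁻ _, ∫⁻ x in T, ‖H x‖ₑ ^ q.toReal ∂μ ∂ν := lintegral_mono_ae <| hST.mono fun t ht =>
        setLIntegral_comp_sub_le hS hT (fun x => ‖H x‖ₑ ^ q.toReal) ht
    _ = ∫⁻ x in T, ‖H x‖ₑ ^ q.toReal ∂μ := by rw [lintegral_const, measure_univ, mul_one]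

/-- The probability measure whose density is a normalized bump function, so that mollifying by the
bump function is averaging translates over this measure. -/
def bumpMeasure (ρ : ContDiffBump (0 : ℝ)) : Measure ℝ :=
  volume.withDensity fun s => ENNReal.ofReal (ρ.normed volume s)

instance isProbabilityMeasure_bumpMeasure (ρ : ContDiffBump (0 : ℝ)) :
    IsProbabilityMeasure (bumpMeasure ρ) := by
  refine ⟨?_⟩
  rw [bumpMeasure, withDensity_apply _ MeasurableSet.univ, setLIntegral_univ,
    ← ofReal_integral_eq_lintegral_ofReal ρ.integrable_normed (.of_forall ρ.nonneg_normed),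
    ρ.integral_normed, ENNReal.ofReal_one]

lemma ae_bumpMeasure_abs_lt (ρ : ContDiffBump (0 : ℝ)) : ∀ᵐ s ∂bumpMeasure ρ, |s| < ρ.rOut := by
  rw [bumpMeasure, ae_withDensity_iff ρ.continuous_normed.measurable.ennreal_ofReal]
  refine .of_forall fun s hs => ?_
  have hmem : s ∈ Function.support (ρ.normed volume) := fun h => hs (by rw [h, ofReal_zero])
  rwa [ρ.support_normed_eq, mem_ball_zero_iff] at hmem

open scoped Convolution in
/-- The mollification `ρ ⋆ w`. -/
def mollify (ρ : ContDiffBump (0 : ℝ)) (w : ℝ → ℝ) : ℝ → ℝ :=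
  ρ.normed volume ⋆[ContinuousLinearMap.lsmul ℝ ℝ, volume] w

lemma mollify_eq_integral (ρ : ContDiffBump (0 : ℝ)) (w : ℝ → ℝ) (u : ℝ) :
    mollify ρ w u = ∫ s, w (u - s) ∂bumpMeasure ρ := by
  rw [bumpMeasure, integral_withDensity_eq_integral_toReal_smul
    ρ.continuous_normed.measurable.ennreal_ofReal (.of_forall fun _ => ofReal_lt_top), mollify,
    convolution_lsmul]
  simp only [toReal_ofReal (ρ.nonneg_normed _)]

lemma fracGrad_mollify (γ : ℝ) (ρ : ContDiffBump (0 : ℝ)) {w : ℝ → ℝ} (hw : Measurable w) {B : ℝ}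
    (hB : ∀ u, |w u| ≤ B) (p : ℝ × ℝ) :
    fracGrad γ (mollify ρ w) p
      = ∫ t, fracGrad γ w (p - t) ∂(bumpMeasure ρ).map fun s => (s, s) := by
  have hint : ∀ u, Integrable (fun s => w (u - s)) (bumpMeasure ρ) := fun u =>
    .of_bound (Measurable.aestronglyMeasurable (by fun_prop)) B (.of_forall fun s => hB _)
  rw [integral_map (by fun_prop) (Measurable.aestronglyMeasurable (by fun_prop)), fracGrad,
    mollify_eq_integral, mollify_eq_integral, ← integral_sub (hint _) (hint _),
    ← integral_mul_const]
  simp only [fracGrad, Prod.fst_sub, Prod.snd_sub, sub_sub_sub_cancel_right]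

lemma eLpNorm_fracGrad_mollify_le (γ : ℝ) (ρ : ContDiffBump (0 : ℝ)) (hρ : ρ.rOut ≤ 1)
    {w : ℝ → ℝ} (hw : Measurable w) {B : ℝ} (hB : ∀ u, |w u| ≤ B) :
    eLpNorm (fracGrad γ (mollify ρ w)) 2 squareMeasure
      ≤ eLpNorm (fracGrad γ w) 2 (volume.restrict (Icc (-1) 2 ×ˢ Icc (-1) 2)) := by
  have : IsProbabilityMeasure ((bumpMeasure ρ).map fun s => (s, s)) :=
    Measure.isProbabilityMeasure_map (by fun_prop)
  rw [funext (fracGrad_mollify γ ρ hw hB), squareMeasure, Measure.prod_restrict,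
    ← Measure.volume_eq_prod]
  refine eLpNorm_integral_comp_sub_le one_le_two ofNat_ne_top
    (measurableSet_Icc.prod measurableSet_Icc) (measurableSet_Icc.prod measurableSet_Icc)
    (measurable_fracGrad γ hw).stronglyMeasurable ?_
  have hsmall : ∀ᵐ t : ℝ × ℝ ∂(bumpMeasure ρ).map fun s => (s, s), |t.1| < 1 ∧ |t.2| < 1 := by
    rw [ae_map_iff (by fun_prop) (by measurability)]
    exact (ae_bumpMeasure_abs_lt ρ).mono fun s hs => ⟨hs.trans_le hρ, hs.trans_le hρ⟩
  filter_upwards [hsmall] with t ht p hp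
  rw [abs_lt, abs_lt] at ht
  obtain ⟨⟨h1, h1'⟩, h2, h2'⟩ := hp
  exact ⟨⟨by simp only [Prod.fst_sub]; linarith, by simp only [Prod.fst_sub]; linarith⟩,
    by simp only [Prod.snd_sub]; linarith, by simp only [Prod.snd_sub]; linarith⟩

lemma isSpatialTest_mollify {η : ℝ} {ρ : ContDiffBump (0 : ℝ)} (hρ : ρ.rOut ≤ η / 2) {w : ℝ → ℝ}
    (hw : LocallyIntegrable w) (hsupp : Function.support w ⊆ Icc η (1 - η)) :
    IsSpatialTest (mollify ρ w) := by
  have hη : 0 < η := by linarith [ρ.rOut_pos]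
  refine ⟨ρ.hasCompactSupport_normed.contDiff_convolution_left _ ρ.contDiff_normed hw,
    Icc (η / 2) (1 - η / 2), isCompact_Icc,
    fun x hx => ⟨by linarith [hx.1], by linarith [hx.2]⟩, fun x hx => ?_⟩
  obtain ⟨s, hs, y, hy, rfl⟩ := support_convolution_subset _ hx
  rw [ρ.support_normed_eq, mem_ball_zero_iff, Real.norm_eq_abs, abs_lt] at hs
  have hy' := hsupp hy
  exact ⟨by linarith [hs.1, hy'.1], by linarith [hs.2, hy'.2]⟩

lemma exists_isSpatialTest_tendsto {γ η : ℝ} (hη : 0 < η) {w : ℝ → ℝ} (hw : Continuous w)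
    (hsupp : Function.support w ⊆ Icc η (1 - η))
    (hE : MemLp (fracGrad γ w) 2 (volume.restrict (Icc (-1) 2 ×ˢ Icc (-1) 2))) :
    ∃ φ : ℕ → ℝ → ℝ, (∀ n, IsSpatialTest (φ n)) ∧
      (∀ u, Tendsto (fun n => φ n u) atTop (𝓝 (w u))) ∧
      ∃ C : ℝ≥0, ∀ n, eLpNorm (fracGrad γ (φ n)) 2 squareMeasure ≤ C := by
  set r : ℕ → ℝ := fun n => min η 1 / 2 * (1 / ((n : ℝ) + 1))
  have hrpos : ∀ n, 0 < r n := fun n => by positivity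
  have hr1 : ∀ n, r n ≤ min η 1 / 2 := fun n =>
    mul_le_of_le_one_right (by positivity) ((div_le_one (by positivity)).mpr (by simp))
  have hr0 : Tendsto r atTop (𝓝 0) := by
    simpa only [mul_zero] using tendsto_one_div_add_atTop_nhds_zero_nat.const_mul (min η 1 / 2)
  let ρ : ℕ → ContDiffBump (0 : ℝ) := fun n =>
    ⟨r n / 2, r n, half_pos (hrpos n), half_lt_self (hrpos n)⟩
  obtain ⟨B, hB⟩ := (HasCompactSupport.intro isCompact_Icc
    fun x hx => Function.notMem_support.mp (mt (@hsupp x) hx)).exists_bound_of_continuous hw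
  refine ⟨fun n => mollify (ρ n) w, fun n => isSpatialTest_mollify ((hr1 n).trans ?_)
    hw.locallyIntegrable hsupp,
    ContDiffBump.convolution_tendsto_right_of_continuous hr0 hw, (eLpNorm _ _ _).toNNReal,
    fun n => (eLpNorm_fracGrad_mollify_le γ (ρ n) ((hr1 n).trans ?_) hw.measurable hB).trans_eq
      (coe_toNNReal hE.2.ne).symm⟩
  · gcongr; exact min_le_left _ _
  · linarith [min_le_right η 1]

/-! ### Uniqueness for the stationary problem -/

/-- Soft thresholding at level `ε`: the difference of `x` and its truncation to `[-ε, ε]`. -/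
def softThreshold (ε x : ℝ) : ℝ := x - max (-ε) (min ε x)

lemma continuous_softThreshold (ε : ℝ) : Continuous (softThreshold ε) := by
  unfold softThreshold; fun_prop

lemma softThreshold_eq_zero {ε x : ℝ} (h : |x| ≤ ε) : softThreshold ε x = 0 := by
  rw [abs_le] at h
  rw [softThreshold, min_eq_right h.2, max_eq_right h.1, sub_self]

lemma abs_le_of_mul_softThreshold_eq_zero {ε x : ℝ} (hε : 0 ≤ ε) (h : softThreshold ε x * x = 0) :
    |x| ≤ ε := by
  rcases mul_eq_zero.mp h with h | rfl
  · rw [sub_eq_zero.mp h]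
    exact abs_le.mpr ⟨le_max_left _ _, max_le (by linarith) (min_le_left _ _)⟩
  · rwa [abs_zero]

lemma softThreshold_sub_mem_Icc (ε : ℝ) {x y : ℝ} (h : x ≤ y) :
    softThreshold ε y - softThreshold ε x ∈ Icc 0 (y - x) := by
  have hmono : max (-ε) (min ε x) ≤ max (-ε) (min ε y) := by gcongr
  have hlip := abs_max_sub_max_le_max (-ε) (min ε y) (-ε) (min ε x)
  have hlip' := abs_min_sub_min_le_max ε y ε x
  have hyx := sub_nonneg.mpr h
  simp only [sub_self, abs_zero, abs_nonneg, sup_of_le_right, abs_of_nonneg hyx, hyx]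
    at hlip hlip'
  unfold softThreshold
  constructor <;> linarith [le_abs_self (max (-ε) (min ε y) - max (-ε) (min ε x))]

lemma abs_softThreshold_sub_le (ε x y : ℝ) : |softThreshold ε x - softThreshold ε y| ≤ |x - y| := by
  wlog h : x ≤ y generalizing x y
  · rw [abs_sub_comm, abs_sub_comm x]; exact this y x (le_of_not_ge h)
  · have hmem := softThreshold_sub_mem_Icc ε h
    rw [abs_sub_comm, abs_of_nonneg hmem.1, abs_sub_comm, abs_of_nonneg (sub_nonneg.mpr h)]
    exact hmem.2

lemma softThreshold_sub_mul_sub_nonneg (ε x y : ℝ) :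
    0 ≤ (softThreshold ε x - softThreshold ε y) * (x - y) := by
  rcases le_total x y with h | h
  · exact mul_nonneg_of_nonpos_of_nonpos (by linarith [(softThreshold_sub_mem_Icc ε h).1])
      (by linarith)
  · exact mul_nonneg (softThreshold_sub_mem_Icc ε h).1 (by linarith)

lemma memLp_fracGrad_softThreshold {γ : ℝ} {W : ℝ → ℝ} (hW : Measurable W)
    (hE : MemLp (fracGrad γ W) 2 squareMeasure) (ε : ℝ) :
    MemLp (fracGrad γ fun u => softThreshold ε (W u)) 2 squareMeasure := by
  refine hE.mono (measurable_fracGrad γ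
    ((continuous_softThreshold ε).measurable.comp hW)).aestronglyMeasurable (.of_forall fun p => ?_)
  simp only [fracGrad, norm_mul, Real.norm_eq_abs]
  exact mul_le_mul_of_nonneg_right (abs_softThreshold_sub_le ε _ _) (abs_nonneg _)

lemma exists_support_softThreshold_subset {W : ℝ → ℝ} (hW : Continuous W)
    (hsupp : Function.support W ⊆ Ioo 0 1) {ε : ℝ} (hε : 0 < ε) :
    ∃ η > 0, (Function.support fun u => softThreshold ε (W u)) ⊆ Icc η (1 - η) := by
  have hsub : {u | ε ≤ |W u|} ⊆ Ioo 0 1 := fun u (hu : ε ≤ |W u|) =>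
    hsupp (abs_pos.mp (hε.trans_le hu))
  have hcompact : IsCompact {u | ε ≤ |W u|} :=
    isCompact_Icc.of_isClosed_subset (isClosed_le continuous_const hW.abs)
      (hsub.trans Ioo_subset_Icc_self)
  obtain ⟨η, hη, hsubη⟩ := exists_subset_Icc_of_isCompact hcompact hsub
  exact ⟨η, hη, fun u hu => hsubη (not_lt.mp fun h => hu (softThreshold_eq_zero h.le))⟩

lemma abs_fracGrad_le_of_le_abs_sub {γ : ℝ} (hγ : 0 < γ) {w : ℝ → ℝ} {B η : ℝ}
    (hB : ∀ u, |w u| ≤ B) (hη : 0 < η) {p : ℝ × ℝ} (hp : η ≤ |p.1 - p.2|) :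
    |fracGrad γ w p| ≤ 2 * B * η ^ (-(1 + γ) / 2) := by
  rw [fracGrad, abs_mul, abs_of_nonneg (halfKernel_nonneg _ _)]
  have hw : |w p.1 - w p.2| ≤ 2 * B := (abs_sub _ _).trans (by linarith [hB p.1, hB p.2])
  exact mul_le_mul hw (Real.rpow_le_rpow_of_nonpos hη hp (by linarith)) (halfKernel_nonneg _ _)
    ((abs_nonneg _).trans hw)

-- Pairs of points at distance less than `η`, not both in `[0,1]`, lie outside the support.
lemma memLp_fracGrad_of_support_subset {γ : ℝ} (hγ : 0 < γ) {w : ℝ → ℝ} (hw : Measurable w)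
    {B η : ℝ} (hB : ∀ u, |w u| ≤ B) (hη : 0 < η) (hsupp : Function.support w ⊆ Icc η (1 - η))
    (hE : MemLp (fracGrad γ w) 2 squareMeasure) {K : Set (ℝ × ℝ)} (hK : volume K ≠ ∞) :
    MemLp (fracGrad γ w) 2 (volume.restrict K) := by
  have : Fact (volume K < ∞) := ⟨hK.lt_top⟩
  set S : Set (ℝ × ℝ) := Icc 0 1 ×ˢ Icc 0 1
  have hS : MemLp (S.indicator (fracGrad γ w)) 2 (volume.restrict K) := by
    refine MemLp.restrict K ((memLp_indicator_iff_restrict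
      (measurableSet_Icc.prod measurableSet_Icc)).mpr ?_)
    rwa [Measure.volume_eq_prod, ← Measure.prod_restrict]
  refine (hS.norm.add (memLp_const (2 * B * η ^ (-(1 + γ) / 2)))).mono
    (measurable_fracGrad γ hw).aestronglyMeasurable (.of_forall fun p => ?_)
  have hB0 : 0 ≤ B := (abs_nonneg _).trans (hB 0)
  refine le_trans ?_ (le_abs_self _)
  rw [Pi.add_apply]
  rcases le_or_gt η |p.1 - p.2| with hfar | hnear
  · exact le_add_of_nonneg_of_le (norm_nonneg _) (abs_fracGrad_le_of_le_abs_sub hγ hB hη hfar)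
  refine le_add_of_le_of_nonneg ?_ (by positivity)
  by_cases hp : p ∈ S
  · rw [indicator_of_mem hp]
  have hzero : ∀ u v, |u - v| < η → (u, v) ∉ S → w u = 0 := fun u v huv hS => by
    by_contra hu
    have hmem := hsupp hu
    rw [abs_lt] at huv
    exact hS ⟨⟨by linarith [hmem.1], by linarith [hmem.2]⟩, by dsimp only; linarith [hmem.1],
      by dsimp only; linarith [hmem.2]⟩
  rw [fracGrad, hzero p.1 p.2 hnear hp,
    hzero p.2 p.1 (by rwa [abs_sub_comm]) fun h => hp ⟨h.2, h.1⟩, sub_zero, zero_mul, norm_zero]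
  exact norm_nonneg _

lemma IsFracHarmonic.integral_mul_eq_zero {γ η : ℝ} (hγ : 0 < γ) {F w : ℝ → ℝ}
    (hF : IsFracHarmonic γ F) (hw : Continuous w) (hη : 0 < η)
    (hsupp : Function.support w ⊆ Icc η (1 - η)) (hE : MemLp (fracGrad γ w) 2 squareMeasure) :
    ∫ p, fracGrad γ w p * fracGrad γ F p ∂squareMeasure = 0 := by
  obtain ⟨B, hB⟩ := (HasCompactSupport.intro isCompact_Icc
    fun x hx => Function.notMem_support.mp (mt (@hsupp x) hx)).exists_bound_of_continuous hw
  obtain ⟨φ, hφ, hφw, C, hC⟩ := exists_isSpatialTest_tendsto hη hw hsupp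
    (memLp_fracGrad_of_support_subset hγ hw.measurable hB hη hsupp hE
      (isCompact_Icc.prod isCompact_Icc).measure_lt_top.ne)
  have hlim := tendsto_integral_mul_of_dominated (p := 2) (q := 2) ofNat_ne_top
    (fun n => (measurable_fracGrad γ (hφ n).1.continuous.measurable).aestronglyMeasurable)
    (fun _ => hF.memLp.1) hC hF.memLp.abs (fun _ => .of_forall fun _ => le_rfl)
    (.of_forall fun p => ((hφw p.1).sub (hφw p.2)).mul_const (halfKernel γ (p.1 - p.2)))
    (.of_forall fun _ => tendsto_const_nhds)
  refine tendsto_nhds_unique hlim (tendsto_nhds_of_eventually_eq (.of_forall fun n => ?_))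
  simp only [mul_comm (fracGrad γ (φ n) _)]
  exact hF.orthogonal _ (hφ n)

lemma sub_mul_sub_eq_zero_of_integral_fracGrad_mul_eq_zero {γ : ℝ} {F G : ℝ → ℝ}
    (hF : Continuous F) (hG : Continuous G) (hFE : MemLp (fracGrad γ F) 2 squareMeasure)
    (hGE : MemLp (fracGrad γ G) 2 squareMeasure)
    (hnonneg : ∀ u v, 0 ≤ (F u - F v) * (G u - G v))
    (hzero : ∫ p, fracGrad γ F p * fracGrad γ G p ∂squareMeasure = 0) :
    ∀ u ∈ Icc (0 : ℝ) 1, ∀ v ∈ Icc (0 : ℝ) 1, (F u - F v) * (G u - G v) = 0 := by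
  have hprod : 0 ≤ fracGrad γ F * fracGrad γ G := fun p => by
    rw [Pi.mul_apply, fracGrad_mul_fracGrad]
    exact mul_nonneg (hnonneg p.1 p.2) (by positivity)
  have hgrad := (integral_eq_zero_iff_of_nonneg hprod (MemLp.integrable_mul hFE hGE)).mp hzero
  have hae : (fun p : ℝ × ℝ => (F p.1 - F p.2) * (G p.1 - G p.2))
      =ᵐ[volume.restrict (Icc (0 : ℝ) 1 ×ˢ Icc (0 : ℝ) 1)] fun _ => 0 := by
    rw [Measure.volume_eq_prod, ← Measure.prod_restrict]
    filter_upwards [hgrad] with p hp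
    rcases eq_or_ne p.1 p.2 with h | h
    · rw [h, sub_self, zero_mul]
    · rw [Pi.zero_apply, Pi.mul_apply, fracGrad_mul_fracGrad] at hp
      have : 0 < |p.1 - p.2| := abs_pos.mpr (sub_ne_zero.mpr h)
      exact (mul_eq_zero.mp hp).resolve_right (by positivity)
  have heqOn := Measure.eqOn_of_ae_eq hae (Continuous.continuousOn (by fun_prop)) continuousOn_const
    (by rw [interior_prod_eq, interior_Icc, closure_prod_eq, closure_Ioo zero_ne_one])
  exact fun u hu v hv => heqOn (show (u, v) ∈ _ from ⟨hu, hv⟩)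

-- Testing against `W` itself would require approximating it by test functions in energy; soft
-- thresholding moves the support away from the boundary and keeps the pairing with `W` nonnegative.
lemma IsFracHarmonic.eq_zero {γ : ℝ} (hγ : 0 < γ) {W : ℝ → ℝ} (hW : Continuous W)
    (hsupp : Function.support W ⊆ Ioo 0 1) (hH : IsFracHarmonic γ W) : W = 0 := by
  ext u
  by_contra hu
  have hu01 := hsupp hu
  have hW0 : W 0 = 0 := Function.notMem_support.mp fun h => lt_irrefl _ (hsupp h).1
  obtain ⟨ε, hε, hεu⟩ := exists_between (abs_pos.mpr hu)
  obtain ⟨η, hη, hsuppη⟩ := exists_support_softThreshold_subset hW hsupp hε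
  have hwc : Continuous fun v => softThreshold ε (W v) := (continuous_softThreshold ε).comp hW
  have hwE := memLp_fracGrad_softThreshold hW.measurable hH.memLp ε
  have hzero := sub_mul_sub_eq_zero_of_integral_fracGrad_mul_eq_zero hwc hW hwE hH.memLp
    (fun u v => softThreshold_sub_mul_sub_nonneg ε (W u) (W v))
    (hH.integral_mul_eq_zero hγ hwc hη hsuppη hwE) u (Ioo_subset_Icc_self hu01) 0 (by simp)
  have hsoft0 : softThreshold ε 0 = 0 := softThreshold_eq_zero (by rw [abs_zero]; exact hε.le)
  rw [hW0, hsoft0, sub_zero, sub_zero] at hzero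
  exact hεu.not_ge (abs_le_of_mul_softThreshold_eq_zero hε.le hzero)

lemma IsFracHarmonic.sub {γ : ℝ} (hγ : γ < 2) {F G : ℝ → ℝ} (hF : IsFracHarmonic γ F)
    (hG : IsFracHarmonic γ G) : IsFracHarmonic γ (F - G) := by
  have hsub : fracGrad γ (F - G) = fracGrad γ F - fracGrad γ G := by
    ext p; simp only [fracGrad, Pi.sub_apply]; ring
  refine ⟨hsub ▸ hF.memLp.sub hG.memLp, fun φ hφ => ?_⟩
  obtain ⟨L, hL⟩ := hφ.exists_lipschitzWith
  have hφE := memLp_fracGrad_of_lipschitzWith hγ hL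
  simp only [hsub, Pi.sub_apply, sub_mul]
  have h := integral_sub (hF.memLp.integrable_mul hφE) (hG.memLp.integrable_mul hφE)
  simp only [Pi.mul_apply] at h
  rw [h, hF.orthogonal φ hφ, hG.orthogonal φ hφ, sub_zero]

theorem IsFracHarmonic.eqOn {γ : ℝ} (hγ0 : 0 < γ) (hγ2 : γ < 2) {F G : ℝ → ℝ}
    (hF : IsFracHarmonic γ F) (hG : IsFracHarmonic γ G) (hFc : ContinuousOn F (Icc 0 1))
    (hGc : ContinuousOn G (Icc 0 1)) (h0 : F 0 = G 0) (h1 : F 1 = G 1) :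
    EqOn F G (Icc 0 1) := by
  set W : ℝ → ℝ := IccExtend zero_le_one ((Icc 0 1).domRestrict (F - G)) with hW
  have hWFG : EqOn (F - G) W (Icc 0 1) := fun u hu => by rw [hW, IccExtend_of_mem _ _ hu]; rfl
  have hsupp : Function.support W ⊆ Ioo 0 1 := fun u hu => by
    by_contra hu01
    rw [mem_Ioo, not_and_or, not_lt, not_lt] at hu01
    rcases hu01 with h | h
    · exact hu (by rw [hW, IccExtend_of_le_left _ _ h]; exact sub_eq_zero.mpr h0)
    · exact hu (by rw [hW, IccExtend_of_right_le _ _ h]; exact sub_eq_zero.mpr h1)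
  have hzero := IsFracHarmonic.eq_zero hγ0 (hFc.sub hGc).domRestrict.Icc_extend' hsupp
    (IsFracHarmonic.congr hWFG (hF.sub hγ2 hG))
  exact fun u hu => sub_eq_zero.mp ((hWFG hu).trans (congrFun hzero u))

/-! ### The discrete energy -/

/-- The Dirichlet form, up to the factor `c_γ / 2`, of the long-range walk killed outside
`Λ_n = {1, …, n - 1}`. -/
def discreteForm (γ : ℝ) (n : ℕ) (a b : ℕ → ℝ) : ℝ :=
  ∑ x ∈ Finset.Icc 1 (n - 1), ∑ y ∈ Finset.Icc 1 (n - 1),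
    (a x - a y) * (b x - b y) * |(x : ℝ) - (y : ℝ)| ^ (-(1 + γ))

lemma discreteForm_self_nonneg (γ : ℝ) (n : ℕ) (a : ℕ → ℝ) : 0 ≤ discreteForm γ n a a :=
  Finset.sum_nonneg fun _ _ => Finset.sum_nonneg fun _ _ =>
    mul_nonneg (mul_self_nonneg _) (Real.rpow_nonneg (abs_nonneg _) _)

lemma two_mul_discreteForm_le (γ : ℝ) (n : ℕ) (a b : ℕ → ℝ) :
    2 * discreteForm γ n a b ≤ discreteForm γ n a a + discreteForm γ n b b := by
  simp only [discreteForm, Finset.mul_sum, ← Finset.sum_add_distrib]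
  gcongr with x _ y _
  have hk := Real.rpow_nonneg (abs_nonneg ((x : ℝ) - y)) (-(1 + γ))
  linarith [mul_nonneg hk (sq_nonneg ((a x - a y) - (b x - b y)))]

lemma discreteForm_sub_right (γ : ℝ) (n : ℕ) (a b c : ℕ → ℝ) :
    discreteForm γ n a (fun x => b x - c x) = discreteForm γ n a b - discreteForm γ n a c := by
  simp only [discreteForm, ← Finset.sum_sub_distrib]
  refine Finset.sum_congr rfl fun x _ => Finset.sum_congr rfl fun y _ => ?_
  ring

lemma cGamma_mul_discreteForm {γ : ℝ} (hγ : 0 < γ) (n : ℕ) (a b : ℕ → ℝ) :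
    cGamma γ * discreteForm γ n a b = -2 * ∑ x ∈ Finset.Icc 1 (n - 1),
      (∑ y ∈ Finset.Icc 1 (n - 1), pker γ ((y : ℝ) - x) * (a y - a x)) * b x := by
  set s := Finset.Icc 1 (n - 1) with hs
  simp only [Finset.sum_mul]
  have hsymm : ∑ x ∈ s, ∑ y ∈ s, pker γ ((y : ℝ) - x) * (a y - a x) * b x
      = -∑ x ∈ s, ∑ y ∈ s, pker γ ((y : ℝ) - x) * (a y - a x) * b y := by
    rw [Finset.sum_comm]
    simp only [← Finset.sum_neg_distrib]
    refine Finset.sum_congr rfl fun x _ => Finset.sum_congr rfl fun y _ => ?_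
    rw [pker_eq hγ, pker_eq hγ, abs_sub_comm]
    ring
  have hsplit : cGamma γ * discreteForm γ n a b
      = ∑ x ∈ s, ∑ y ∈ s, pker γ ((y : ℝ) - x) * (a y - a x) * b y
        - ∑ x ∈ s, ∑ y ∈ s, pker γ ((y : ℝ) - x) * (a y - a x) * b x := by
    simp only [discreteForm, ← hs, Finset.mul_sum, ← Finset.sum_sub_distrib]
    refine Finset.sum_congr rfl fun x _ => Finset.sum_congr rfl fun y _ => ?_
    rw [pker_eq hγ, abs_sub_comm (y : ℝ)]
    ring
  linarith

namespace IsDiscreteProfile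

variable {γ Φl Φr : ℝ} {n : ℕ} {ψ : ℕ → ℝ}

lemma cGamma_mul_discreteForm (hγ : 0 < γ) (hn : 2 ≤ n) (h : IsDiscreteProfile γ Φl Φr n ψ)
    (g : ℕ → ℝ) : cGamma γ * discreteForm γ n ψ g
      = 2 * (g 1 * (Φl - ψ 1) + g (n - 1) * (Φr - ψ (n - 1))) := by
  have hfirst : 1 ∈ Finset.Icc 1 (n - 1) := by rw [Finset.mem_Icc]; omega
  have hlast : n - 1 ∈ Finset.Icc 1 (n - 1) := by rw [Finset.mem_Icc]; omega
  have htested := Finset.sum_eq_zero fun x hx => mul_eq_zero_of_left (h x hx) (g x)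
  simp only [add_mul, Finset.sum_add_distrib, ite_mul, zero_mul, Finset.sum_ite_eq', hfirst,
    hlast, if_true] at htested
  rw [_root_.cGamma_mul_discreteForm hγ]
  linarith

lemma cGamma_mul_discreteForm_add_le (hγ : 0 < γ) (hn : 2 ≤ n)
    (h : IsDiscreteProfile γ Φl Φr n ψ) {g : ℕ → ℝ} (hg_left : g 1 = Φl)
    (hg_right : g (n - 1) = Φr) :
    cGamma γ * discreteForm γ n ψ ψ + 4 * (ψ 1 - Φl) ^ 2 + 4 * (ψ (n - 1) - Φr) ^ 2
      ≤ cGamma γ * discreteForm γ n g g := by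
  have htest := h.cGamma_mul_discreteForm hγ hn fun x => ψ x - g x
  rw [discreteForm_sub_right, hg_left, hg_right] at htest
  have hYoung := mul_le_mul_of_nonneg_left (two_mul_discreteForm_le γ n ψ g) (cGamma_pos hγ).le
  linarith

lemma discreteForm_self_le (hγ : 0 < γ) (hn : 2 ≤ n) (h : IsDiscreteProfile γ Φl Φr n ψ)
    {g : ℕ → ℝ} (hg_left : g 1 = Φl) (hg_right : g (n - 1) = Φr) :
    discreteForm γ n ψ ψ ≤ discreteForm γ n g g := by
  refine le_of_mul_le_mul_left ?_ (cGamma_pos hγ)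
  linarith [h.cGamma_mul_discreteForm_add_le hγ hn hg_left hg_right, sq_nonneg (ψ 1 - Φl),
    sq_nonneg (ψ (n - 1) - Φr)]

lemma sq_sub_add_sq_sub_le (hγ : 0 < γ) (hn : 2 ≤ n) (h : IsDiscreteProfile γ Φl Φr n ψ)
    {g : ℕ → ℝ} (hg_left : g 1 = Φl) (hg_right : g (n - 1) = Φr) :
    (ψ 1 - Φl) ^ 2 + (ψ (n - 1) - Φr) ^ 2 ≤ cGamma γ * discreteForm γ n g g := by
  have := mul_nonneg (cGamma_pos hγ).le (discreteForm_self_nonneg γ n ψ)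
  linarith [h.cGamma_mul_discreteForm_add_le hγ hn hg_left hg_right, sq_nonneg (ψ 1 - Φl),
    sq_nonneg (ψ (n - 1) - Φr)]

end IsDiscreteProfile

/-! ### Step functions on the grid -/

lemma integral_natFloor_mul {n : ℕ} (hn : n ≠ 0) (F : ℕ → ℝ) :
    ∫ u, F ⌊n * u⌋₊ ∂unitMeasure = (1 / n : ℝ) * ∑ k ∈ Finset.range n, F k := by
  have hcell (k : ℕ) : EqOn (fun v : ℝ => F ⌊v⌋₊) (fun _ => F k) (Ioo k (k + 1)) := fun v hv => by
    beta_reduce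
    rw [(Nat.floor_eq_iff (k.cast_nonneg.trans hv.1.le)).mpr ⟨hv.1.le, hv.2⟩]
  have hle (k : ℕ) : (k : ℝ) ≤ k + 1 := by linarith
  have hintble (k : ℕ) : IntervalIntegrable (fun v : ℝ => F ⌊v⌋₊) volume k (k + 1 : ℕ) := by
    push_cast
    exact intervalIntegrable_const.congr_uIoo (uIoo_of_le (hle k) ▸ (hcell k).symm)
  have hsum := intervalIntegral.sum_integral_adjacent_intervals fun k (_ : k < n) => hintble k
  rw [integral_Icc_eq_integral_Ioc, ← intervalIntegral.integral_of_le zero_le_one,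
    intervalIntegral.integral_comp_mul_left (fun v => F ⌊v⌋₊) (Nat.cast_ne_zero.mpr hn), mul_zero,
    mul_one, smul_eq_mul, ← one_div, ← Nat.cast_zero, ← hsum]
  refine congrArg _ (Finset.sum_congr rfl fun k _ => ?_)
  push_cast
  rw [intervalIntegral.integral_congr_Ioo_of_le (hle k) (hcell k), intervalIntegral.integral_const,
    add_sub_cancel_left, one_smul]

lemma measurable_natFloor_mul_prod (n : ℕ) (F : ℕ → ℕ → ℝ) :
    Measurable fun p : ℝ × ℝ => F ⌊n * p.1⌋₊ ⌊n * p.2⌋₊ := by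
  have hF : Measurable (Function.uncurry F) := measurable_of_countable _
  exact hF.comp (f := fun p : ℝ × ℝ => (⌊n * p.1⌋₊, ⌊n * p.2⌋₊)) (by fun_prop)

lemma natFloor_mul_le {n : ℕ} {u : ℝ} (hu : u ∈ Icc (0 : ℝ) 1) : ⌊n * u⌋₊ ≤ n :=
  Nat.floor_le_of_le (mul_le_of_le_one_right n.cast_nonneg hu.2)

lemma integrable_natFloor_mul_prod (n : ℕ) (F : ℕ → ℕ → ℝ) :
    Integrable (fun p : ℝ × ℝ => F ⌊n * p.1⌋₊ ⌊n * p.2⌋₊) squareMeasure := by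
  obtain ⟨M, hM⟩ := (((finite_Iic n).prod (finite_Iic n)).image fun q => |F q.1 q.2|).bddAbove
  refine Integrable.of_bound (measurable_natFloor_mul_prod n F).aestronglyMeasurable M ?_
  filter_upwards [ae_squareMeasure_mem] with p hp
  exact hM ⟨(⌊n * p.1⌋₊, ⌊n * p.2⌋₊), ⟨natFloor_mul_le hp.1, natFloor_mul_le hp.2⟩, rfl⟩

lemma integral_natFloor_mul_prod {n : ℕ} (hn : n ≠ 0) (F : ℕ → ℕ → ℝ) :
    ∫ p : ℝ × ℝ, F ⌊n * p.1⌋₊ ⌊n * p.2⌋₊ ∂squareMeasure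
      = (1 / n : ℝ) ^ 2 * ∑ x ∈ Finset.range n, ∑ y ∈ Finset.range n, F x y := by
  rw [integral_prod _ (integrable_natFloor_mul_prod n F)]
  simp only [fun k : ℕ => integral_natFloor_mul hn (F k)]
  rw [integral_natFloor_mul hn fun k => (1 / n : ℝ) * ∑ y ∈ Finset.range n, F k y,
    ← Finset.mul_sum]
  ring

/-- The Gagliardo quotient of the profile `a` between the grid points `x / n` and `y / n`, set to
`0` outside `Λ_n`: only the index `0` has to be excluded, as the step functions below see the
indices `< n`. -/
def gridGrad (γ : ℝ) (n : ℕ) (a : ℕ → ℝ) (x y : ℕ) : ℝ :=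
  if 1 ≤ x ∧ 1 ≤ y then (a x - a y) * halfKernel γ (((x : ℝ) - y) / n) else 0

/-- The step function on the unit square whose value on the cell of `(x / n, y / n)` is
`gridGrad γ n a x y`. -/
def stepGrad (γ : ℝ) (n : ℕ) (a : ℕ → ℝ) (p : ℝ × ℝ) : ℝ :=
  gridGrad γ n a ⌊n * p.1⌋₊ ⌊n * p.2⌋₊

@[fun_prop]
lemma measurable_stepGrad (γ : ℝ) (n : ℕ) (a : ℕ → ℝ) : Measurable (stepGrad γ n a) :=
  measurable_natFloor_mul_prod n (gridGrad γ n a)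

lemma sum_range_eq_sum_Icc {n : ℕ} {F : ℕ → ℝ} (h0 : F 0 = 0) :
    ∑ x ∈ Finset.range n, F x = ∑ x ∈ Finset.Icc 1 (n - 1), F x := by
  refine (Finset.sum_subset (fun x hx => ?_) fun x hx hx' => ?_).symm
  · rw [Finset.mem_Icc] at hx
    rw [Finset.mem_range]
    omega
  · rw [Finset.mem_range] at hx
    rw [Finset.mem_Icc] at hx'
    rw [show x = 0 by omega, h0]

lemma integral_stepGrad_mul_stepGrad {n : ℕ} (hn : n ≠ 0) (γ : ℝ) (a b : ℕ → ℝ) :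
    ∫ p, stepGrad γ n a p * stepGrad γ n b p ∂squareMeasure
      = (n : ℝ) ^ (γ - 1) * discreteForm γ n a b := by
  have hn0 : (0 : ℝ) < n := by positivity
  have hpow : (1 / n : ℝ) ^ 2 / (n : ℝ) ^ (-(1 + γ)) = (n : ℝ) ^ (γ - 1) := by
    rw [one_div, inv_pow, ← Real.rpow_natCast, ← Real.rpow_neg hn0.le, ← Real.rpow_sub hn0]
    congr 1
    push_cast
    ring
  refine (integral_natFloor_mul_prod hn fun x y => gridGrad γ n a x y * gridGrad γ n b x y).trans ?_
  have hrow (x : ℕ) := sum_range_eq_sum_Icc (n := n)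
    (F := fun y => gridGrad γ n a x y * gridGrad γ n b x y) (by simp [gridGrad])
  rw [sum_range_eq_sum_Icc (by simp [gridGrad])]
  simp only [hrow, discreteForm, Finset.mul_sum]
  refine Finset.sum_congr rfl fun x hx => Finset.sum_congr rfl fun y hy => ?_
  have hxy : 1 ≤ x ∧ 1 ≤ y := ⟨(Finset.mem_Icc.mp hx).1, (Finset.mem_Icc.mp hy).1⟩
  rw [gridGrad, gridGrad, if_pos hxy, if_pos hxy, mul_mul_mul_comm, halfKernel_mul_self, abs_div,
    Nat.abs_cast, Real.div_rpow (abs_nonneg _) hn0.le, ← hpow]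
  ring

lemma integrable_stepGrad_mul_stepGrad (γ : ℝ) (n : ℕ) (a b : ℕ → ℝ) :
    Integrable (fun p => stepGrad γ n a p * stepGrad γ n b p) squareMeasure :=
  integrable_natFloor_mul_prod n fun x y => gridGrad γ n a x y * gridGrad γ n b x y

lemma abs_sub_le_two_mul_abs_natFloor_sub {x y : ℝ} (hx : 0 ≤ x) (hy : 0 ≤ y)
    (hxy : ⌊x⌋₊ ≠ ⌊y⌋₊) : |x - y| ≤ 2 * |(⌊x⌋₊ : ℝ) - ⌊y⌋₊| := by
  have hone : (1 : ℝ) ≤ |(⌊x⌋₊ : ℝ) - ⌊y⌋₊| := by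
    exact_mod_cast Int.one_le_abs (sub_ne_zero.mpr (Nat.cast_injective.ne hxy))
  have := Nat.floor_le hx
  have := Nat.floor_le hy
  have hle : |x - y| ≤ |(⌊x⌋₊ : ℝ) - ⌊y⌋₊| + 1 := by
    rw [abs_le]
    constructor <;> cases abs_cases ((⌊x⌋₊ : ℝ) - ⌊y⌋₊) <;> linarith [Nat.lt_floor_add_one x,
      Nat.lt_floor_add_one y]
  linarith

lemma abs_natFloor_sub_div_rpow_le {n : ℕ} (hn : n ≠ 0) {u v β : ℝ} (hu : 0 ≤ u) (hv : 0 ≤ v)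
    (hβ : β < 0) : |((⌊n * u⌋₊ : ℝ) - ⌊n * v⌋₊) / n| ^ β ≤ 2 ^ (-β) * |u - v| ^ β := by
  rcases eq_or_ne ⌊n * u⌋₊ ⌊n * v⌋₊ with heq | hne
  · rw [heq, sub_self, zero_div, abs_zero, Real.zero_rpow hβ.ne]
    positivity
  have hn0 : (0 : ℝ) < n := by positivity
  have huv : 0 < |u - v| := abs_pos.mpr (sub_ne_zero.mpr fun h => hne (by rw [h]))
  have hhalf : |u - v| / 2 ≤ |((⌊n * u⌋₊ : ℝ) - ⌊n * v⌋₊) / n| := by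
    have h := abs_sub_le_two_mul_abs_natFloor_sub (by positivity) (by positivity) hne
    rw [← mul_sub, abs_mul, Nat.abs_cast] at h
    rw [abs_div, Nat.abs_cast, le_div_iff₀ hn0]
    linarith
  calc |((⌊n * u⌋₊ : ℝ) - ⌊n * v⌋₊) / n| ^ β ≤ (|u - v| / 2) ^ β :=
        Real.rpow_le_rpow_of_nonpos (by positivity) hhalf hβ.le
    _ = 2 ^ (-β) * |u - v| ^ β := by
        rw [Real.div_rpow huv.le (by norm_num), Real.rpow_neg (by norm_num), div_eq_inv_mul]

lemma abs_stepGrad_le {γ : ℝ} (hγ : 1 < γ) {L : ℝ≥0} {h : ℝ → ℝ} (hh : LipschitzWith L h) {n : ℕ}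
    (hn : n ≠ 0) {p : ℝ × ℝ} (hp1 : 0 ≤ p.1) (hp2 : 0 ≤ p.2) :
    |stepGrad γ n (fun x => h (x / n)) p|
      ≤ L * 2 ^ (-((1 - γ) / 2)) * |p.1 - p.2| ^ ((1 - γ) / 2) := by
  rw [stepGrad, gridGrad]
  split_ifs with hc
  · rw [mul_assoc]
    calc |(h (⌊n * p.1⌋₊ / n) - h (⌊n * p.2⌋₊ / n))
          * halfKernel γ (((⌊n * p.1⌋₊ : ℝ) - ⌊n * p.2⌋₊) / n)|
        ≤ L * |((⌊n * p.1⌋₊ : ℝ) - ⌊n * p.2⌋₊) / n| ^ ((1 - γ) / 2) := by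
          rw [_root_.sub_div]
          exact abs_fracGrad_le γ hh (_, _)
      _ ≤ L * (2 ^ (-((1 - γ) / 2)) * |p.1 - p.2| ^ ((1 - γ) / 2)) := by
          gcongr
          exact abs_natFloor_sub_div_rpow_le hn hp1 hp2 (by linarith)
  · rw [abs_zero]; positivity

lemma exists_discreteForm_le_of_lipschitzWith {γ : ℝ} (hγ1 : 1 < γ) (hγ2 : γ < 2) {L : ℝ≥0}
    {h : ℝ → ℝ} (hh : LipschitzWith L h) : ∃ C, ∀ n : ℕ, n ≠ 0 → (n : ℝ) ^ (γ - 1) *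
      discreteForm γ n (fun x => h (x / n)) (fun x => h (x / n)) ≤ C := by
  refine ⟨∫ p, (L * 2 ^ (-((1 - γ) / 2)) * |p.1 - p.2| ^ ((1 - γ) / 2)) ^ 2 ∂squareMeasure,
    fun n hn => ?_⟩
  rw [← integral_stepGrad_mul_stepGrad hn]
  refine integral_mono_ae (integrable_stepGrad_mul_stepGrad γ n _ _)
    ((memLp_abs_sub_rpow_half hγ2).const_mul _).integrable_sq ?_
  filter_upwards [ae_squareMeasure_mem] with p hp
  rw [← sq, ← sq_abs]
  gcongr
  exact abs_stepGrad_le hγ1 hh hn hp.1.1 hp.2.1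

/-! ### A discrete Morrey inequality -/

lemma one_le_rpow_mul_rpow_neg {r d β : ℝ} (hr : 0 < r) (hrd : r ≤ d) (hβ : 0 ≤ β) :
    1 ≤ d ^ β * r ^ (-β) := by
  rw [Real.rpow_neg hr.le, ← div_eq_mul_inv, one_le_div (by positivity)]
  exact Real.rpow_le_rpow hr.le hrd hβ

lemma sq_mul_le_discreteForm {γ : ℝ} (hγ : -1 ≤ γ) {n a b k : ℕ} (ha : 1 ≤ a) (hb : b ≤ n - 1)
    (hk : a + 2 * k < b) {ψ : ℕ → ℝ} {R : ℝ}
    (hR : ∀ x ∈ Finset.Icc a (a + k), ∀ y ∈ Finset.Icc (b - k) b, R ^ 2 ≤ (ψ x - ψ y) ^ 2) :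
    ((k + 1) * R) ^ 2 ≤ ((b : ℝ) - a) ^ (1 + γ) * discreteForm γ n ψ ψ := by
  set block := Finset.Icc a (a + k) ×ˢ Finset.Icc (b - k) b with hblock
  set s := Finset.Icc 1 (n - 1) with hs
  have hmem {q : ℕ × ℕ} : q ∈ block ↔ (a ≤ q.1 ∧ q.1 ≤ a + k) ∧ b - k ≤ q.2 ∧ q.2 ≤ b := by
    rw [hblock, Finset.mem_product, Finset.mem_Icc, Finset.mem_Icc]
  have hsub : block ⊆ s ×ˢ s := fun q hq => by
    rw [hmem] at hq
    rw [Finset.mem_product, hs, Finset.mem_Icc, Finset.mem_Icc]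
    omega
  have hcard : block.card = (k + 1) * (k + 1) := by
    rw [hblock, Finset.card_product, Nat.card_Icc, Nat.card_Icc]
    congr 1 <;> omega
  have hkernel (q) (hq : q ∈ block) :
      1 ≤ ((b : ℝ) - a) ^ (1 + γ) * |(q.1 : ℝ) - q.2| ^ (-(1 + γ)) := by
    rw [hmem] at hq
    have hlt : (q.1 : ℝ) < q.2 := by exact_mod_cast (show q.1 < q.2 by omega)
    have hle_left : (a : ℝ) ≤ q.1 := by exact_mod_cast hq.1.1
    have hle_right : (q.2 : ℝ) ≤ b := by exact_mod_cast hq.2.2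
    rw [abs_sub_comm, abs_of_pos (sub_pos.mpr hlt)]
    exact one_le_rpow_mul_rpow_neg (sub_pos.mpr hlt) (by linarith) (by linarith)
  calc ((k + 1) * R) ^ 2 = ∑ q ∈ block, R ^ 2 := by
        rw [Finset.sum_const, hcard, nsmul_eq_mul]; push_cast; ring
    _ ≤ ∑ q ∈ block, (ψ q.1 - ψ q.2) ^ 2
          * (((b : ℝ) - a) ^ (1 + γ) * |(q.1 : ℝ) - q.2| ^ (-(1 + γ))) := by
        refine Finset.sum_le_sum fun q hq => ?_
        have hq' := Finset.mem_product.mp hq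
        exact (hR q.1 hq'.1 q.2 hq'.2).trans
          (le_mul_of_one_le_right (sq_nonneg _) (hkernel q hq))
    _ = ((b : ℝ) - a) ^ (1 + γ) * ∑ q ∈ block,
          (ψ q.1 - ψ q.2) * (ψ q.1 - ψ q.2) * |(q.1 : ℝ) - q.2| ^ (-(1 + γ)) := by
        rw [Finset.mul_sum]; exact Finset.sum_congr rfl fun q _ => by ring
    _ ≤ ((b : ℝ) - a) ^ (1 + γ) * discreteForm γ n ψ ψ := by
        have : (a : ℝ) ≤ b := by exact_mod_cast (show a ≤ b by omega)
        rw [discreteForm, ← Finset.sum_product']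
        refine mul_le_mul_of_nonneg_left (Finset.sum_le_sum_of_subset_of_nonneg hsub
          fun q _ _ => ?_) (Real.rpow_nonneg (by linarith) _)
        exact mul_nonneg (mul_self_nonneg _) (Real.rpow_nonneg (abs_nonneg _) _)

lemma sqrt_rpow_one_add_mul {γ d : ℝ} (hd : 0 < d) (D : ℝ) :
    √(d ^ (1 + γ) * D) = d * d ^ ((γ - 1) / 2) * √D := by
  rw [Real.sqrt_mul (by positivity), Real.sqrt_eq_rpow, ← Real.rpow_mul hd.le]
  nth_rewrite 2 [← Real.rpow_one d]
  rw [← Real.rpow_add hd]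
  congr 2
  ring

lemma abs_sub_sub_le_of_holder_bound {ψ : ℕ → ℝ} {s : Finset ℕ} {S α r : ℝ} (hα : 0 ≤ α)
    (hS0 : 0 ≤ S) (hS : ∀ x ∈ s, ∀ y ∈ s, |ψ x - ψ y| ≤ S * |(x : ℝ) - y| ^ α) {a b x y : ℕ}
    (ha : a ∈ s) (hb : b ∈ s) (hx : x ∈ s) (hy : y ∈ s) (hax : |(a : ℝ) - x| ≤ r)
    (hyb : |(y : ℝ) - b| ≤ r) : |ψ a - ψ b| - 2 * S * r ^ α ≤ |ψ x - ψ y| := by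
  have hψax := (hS a ha x hx).trans
    (mul_le_mul_of_nonneg_left (Real.rpow_le_rpow (abs_nonneg _) hax hα) hS0)
  have hψyb := (hS y hy b hb).trans
    (mul_le_mul_of_nonneg_left (Real.rpow_le_rpow (abs_nonneg _) hyb hα) hS0)
  linarith [abs_sub_le (ψ a) (ψ x) (ψ b), abs_sub_le (ψ x) (ψ y) (ψ b)]

-- Compare `ψ a - ψ b` with all increments between the two blocks of length `η (b - a)` at the ends
-- of `[a, b]`: the Hölder bound controls the error, and the energy controls the mean increment.
lemma abs_sub_le_of_holder_bound {γ : ℝ} (hγ : 1 ≤ γ) {η : ℝ} (hη : 0 < η) (hη2 : η < 1 / 2)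
    {n : ℕ} {ψ : ℕ → ℝ} {S : ℝ} (hS0 : 0 ≤ S)
    (hS : ∀ x ∈ Finset.Icc 1 (n - 1), ∀ y ∈ Finset.Icc 1 (n - 1),
      |ψ x - ψ y| ≤ S * |(x : ℝ) - y| ^ ((γ - 1) / 2))
    {a b : ℕ} (ha : 1 ≤ a) (hb : b ≤ n - 1) (hab : a < b) :
    |ψ a - ψ b| ≤ (2 * η ^ ((γ - 1) / 2) * S + √(discreteForm γ n ψ ψ) / η)
      * ((b : ℝ) - a) ^ ((γ - 1) / 2) := by
  set α := (γ - 1) / 2 with hα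
  set d : ℝ := (b : ℝ) - a
  have hd0 : 0 < d := sub_pos.mpr (by exact_mod_cast hab)
  set k := ⌊η * d⌋₊
  have hk_le : (k : ℝ) ≤ η * d := Nat.floor_le (by positivity)
  have hk_lt : a + 2 * k < b := by
    have : (a : ℝ) + 2 * k < b := by nlinarith
    exact_mod_cast this
  set R := |ψ a - ψ b| - 2 * S * (η * d) ^ α with hR
  have hR_le (x) (hx : x ∈ Finset.Icc a (a + k)) (y) (hy : y ∈ Finset.Icc (b - k) b) :
      R ≤ |ψ x - ψ y| := by
    rw [Finset.mem_Icc] at hx hy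
    have hax : (a : ℝ) ≤ x ∧ (x : ℝ) ≤ a + k := by exact_mod_cast hx
    have hyb : (y : ℝ) ≤ b ∧ (b : ℝ) ≤ y + k := by exact_mod_cast (by omega : y ≤ b ∧ b ≤ y + k)
    refine abs_sub_sub_le_of_holder_bound (by linarith) hS0 hS ?_ ?_ ?_ ?_
      (abs_le.mpr ⟨by linarith, by linarith⟩) (abs_le.mpr ⟨by linarith, by linarith⟩)
    all_goals rw [Finset.mem_Icc]; omega
  have hmean : η * d * R ≤ d * d ^ α * √(discreteForm γ n ψ ψ) := by
    rcases le_total R 0 with hR0 | hR0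
    · exact (mul_nonpos_of_nonneg_of_nonpos (by positivity) hR0).trans (by positivity)
    rw [hα, ← sqrt_rpow_one_add_mul hd0]
    refine (mul_le_mul_of_nonneg_right (Nat.lt_floor_add_one (η * d)).le hR0).trans
      (Real.le_sqrt_of_sq_le (sq_mul_le_discreteForm (by linarith) ha hb hk_lt ?_))
    exact fun x hx y hy => (pow_le_pow_left₀ hR0 (hR_le x hx y hy) 2).trans_eq (sq_abs _)
  have hR_bound : R ≤ √(discreteForm γ n ψ ψ) / η * d ^ α := by
    rw [div_mul_eq_mul_div, le_div_iff₀ hη]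
    exact le_of_mul_le_mul_left (by linarith) hd0
  rw [hR, Real.mul_rpow hη.le hd0.le] at hR_bound
  linarith

lemma exists_minimal_holder_constant {s : Finset ℕ} (hs : s.Nonempty) (α : ℝ) (ψ : ℕ → ℝ) :
    ∃ S, 0 ≤ S ∧ (∀ x ∈ s, ∀ y ∈ s, |ψ x - ψ y| ≤ S * |(x : ℝ) - y| ^ α) ∧
      (S = 0 ∨ ∃ a ∈ s, ∃ b ∈ s, a < b ∧ |ψ a - ψ b| = S * ((b : ℝ) - a) ^ α) := by
  obtain ⟨q, hq, hmax⟩ := Finset.exists_max_image (s ×ˢ s)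
    (fun q : ℕ × ℕ => |ψ q.1 - ψ q.2| / |(q.1 : ℝ) - q.2| ^ α) (hs.product hs)
  rw [Finset.mem_product] at hq
  have hpos {x y : ℕ} (h : x ≠ y) : 0 < |(x : ℝ) - y| ^ α :=
    Real.rpow_pos_of_pos (abs_pos.mpr (sub_ne_zero.mpr (Nat.cast_injective.ne h))) _
  refine ⟨|ψ q.1 - ψ q.2| / |(q.1 : ℝ) - q.2| ^ α, by positivity, fun x hx y hy => ?_, ?_⟩
  · rcases eq_or_ne x y with rfl | hxy
    · rw [sub_self, abs_zero]; positivity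
    · rw [← div_le_iff₀ (hpos hxy)]
      exact hmax (x, y) (Finset.mem_product.mpr ⟨hx, hy⟩)
  · rcases lt_trichotomy q.1 q.2 with h | h | h
    · refine .inr ⟨q.1, hq.1, q.2, hq.2, h, ?_⟩
      rw [← abs_of_pos (sub_pos.mpr (Nat.cast_lt.mpr h)), abs_sub_comm (q.2 : ℝ),
        div_mul_cancel₀ _ (hpos h.ne).ne']
    · exact .inl (by rw [h, sub_self, abs_zero, zero_div])
    · refine .inr ⟨q.2, hq.2, q.1, hq.1, h, ?_⟩
      rw [← abs_of_pos (sub_pos.mpr (Nat.cast_lt (α := ℝ).mpr h)), abs_sub_comm (ψ q.2), abs_abs,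
        div_mul_cancel₀ _ (hpos h.ne').ne']

-- `η` is chosen with `2 η ^ ((γ - 1) / 2) ≤ 1 / 2`, so that the minimal Hölder constant can be
-- absorbed in the left-hand side of the preceding estimate.
lemma exists_holder_le_sqrt_discreteForm {γ : ℝ} (hγ : 1 < γ) :
    ∃ K, 0 ≤ K ∧ ∀ (n : ℕ) (ψ : ℕ → ℝ),
      ∀ a ∈ Finset.Icc 1 (n - 1), ∀ b ∈ Finset.Icc 1 (n - 1),
        |ψ a - ψ b| ≤ K * √(discreteForm γ n ψ ψ) * |(a : ℝ) - b| ^ ((γ - 1) / 2) := by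
  set α := (γ - 1) / 2 with hα
  have hα0 : 0 < α := by linarith
  set η : ℝ := (1 / 4) ^ max 1 (1 / α) with hη
  have hη0 : 0 < η := by positivity
  have hη_le : η < 1 / 2 := by
    have : η ≤ (1 / 4 : ℝ) ^ (1 : ℝ) :=
      Real.rpow_le_rpow_of_exponent_ge (by norm_num) (by norm_num) (le_max_left _ _)
    rw [Real.rpow_one] at this
    linarith
  have hηα : η ^ α ≤ 1 / 4 := by
    rw [hη, ← Real.rpow_mul (by norm_num)]
    nth_rewrite 2 [← Real.rpow_one (1 / 4)]
    refine Real.rpow_le_rpow_of_exponent_ge (by norm_num) (by norm_num) ?_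
    rw [← div_le_iff₀ hα0]
    exact le_max_right _ _
  refine ⟨2 / η, by positivity, fun n ψ a ha b hb => ?_⟩
  set D := discreteForm γ n ψ ψ
  obtain ⟨S, hS0, hS, hS_eq⟩ := exists_minimal_holder_constant ⟨a, ha⟩ α ψ
  suffices S ≤ 2 / η * √D from (hS a ha b hb).trans (by gcongr)
  rcases hS_eq with rfl | ⟨x, hx, y, hy, hxy, hS_eq⟩
  · positivity
  have hxy0 : (0 : ℝ) < (y - x : ℝ) ^ α :=
    Real.rpow_pos_of_pos (sub_pos.mpr (Nat.cast_lt.mpr hxy)) _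
  have habsorb : S ≤ 2 * η ^ α * S + √D / η := by
    refine le_of_mul_le_mul_right (hS_eq ▸ ?_) hxy0
    exact abs_sub_le_of_holder_bound hγ.le hη0 hη_le hS0 hS (Finset.mem_Icc.mp hx).1
      (Finset.mem_Icc.mp hy).2 hxy
  have hsmall : 2 * η ^ α * S ≤ 1 / 2 * S := by gcongr; linarith
  calc S ≤ 2 * (√D / η) := by linarith
    _ = 2 / η * √D := by ring

/-! ### A priori bounds -/

lemma exists_lipschitzWith_eq_near_boundary (Φl Φr : ℝ) : ∃ (L : ℝ≥0) (h : ℝ → ℝ),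
    LipschitzWith L h ∧ (∀ u ≤ 1 / 3, h u = Φl) ∧ ∀ u ≥ 2 / 3, h u = Φr := by
  have hline : LipschitzWith 3 fun u : ℝ => 3 * u - 1 := LipschitzWith.of_dist_le_mul fun u v => by
    rw [Real.dist_eq, Real.dist_eq, sub_sub_sub_cancel_right, ← mul_sub, abs_mul]
    norm_num
  have hscale : LipschitzWith ‖Φr - Φl‖₊ fun t : ℝ => Φl + (Φr - Φl) * t :=
    LipschitzWith.of_dist_le_mul fun s t => by
      rw [Real.dist_eq, Real.dist_eq, add_sub_add_left_eq_sub, ← mul_sub, abs_mul, coe_nnnorm,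
        Real.norm_eq_abs]
  refine ⟨_, fun u => Φl + (Φr - Φl) * projIcc 0 1 zero_le_one (3 * u - 1),
    hscale.comp (LipschitzWith.subtype_val _ |>.comp <| (LipschitzWith.projIcc _).comp hline),
    fun u hu => ?_, fun u hu => ?_⟩
  · beta_reduce
    rw [projIcc_of_le_left _ (by linarith), mul_zero, add_zero]
  · beta_reduce
    rw [projIcc_of_right_le _ (by linarith), mul_one, add_sub_cancel]

namespace IsDiscreteProfile

variable {γ : ℝ}

theorem exists_energy_le (hγ1 : 1 < γ) (hγ2 : γ < 2) (Φl Φr : ℝ) :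
    ∃ C, ∀ n ≥ 3, ∀ ψ, IsDiscreteProfile γ Φl Φr n ψ →
      (n : ℝ) ^ (γ - 1) * discreteForm γ n ψ ψ ≤ C ∧
      (n : ℝ) ^ (γ - 1) * ((ψ 1 - Φl) ^ 2 + (ψ (n - 1) - Φr) ^ 2) ≤ C := by
  have hγ0 : 0 < γ := by linarith
  obtain ⟨L, h, hh, hleft, hright⟩ := exists_lipschitzWith_eq_near_boundary Φl Φr
  obtain ⟨C, hC⟩ := exists_discreteForm_le_of_lipschitzWith hγ1 hγ2 hh
  refine ⟨max C (cGamma γ * C), fun n hn ψ hψ => ?_⟩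
  have hn3 : (3 : ℝ) ≤ n := by exact_mod_cast hn
  have hfirst : h ((1 : ℕ) / n) = Φl := hleft _ (by
    rw [div_le_iff₀ (by linarith)]
    push_cast
    linarith)
  have hlast : h ((n - 1 : ℕ) / n) = Φr := hright _ (by
    rw [ge_iff_le, le_div_iff₀ (by linarith), Nat.cast_sub (by omega)]
    push_cast
    linarith)
  have hpow : 0 ≤ (n : ℝ) ^ (γ - 1) := by positivity
  have hCn := hC n (by omega)
  constructor
  · exact (mul_le_mul_of_nonneg_left (hψ.discreteForm_self_le hγ0 (by omega)
      (g := fun x => h (x / n)) hfirst hlast) hpow).trans (hCn.trans (le_max_left _ _))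
  · refine (mul_le_mul_of_nonneg_left (hψ.sq_sub_add_sq_sub_le hγ0 (by omega)
      (g := fun x => h (x / n)) hfirst hlast) hpow).trans (le_trans ?_ (le_max_right _ _))
    rw [mul_left_comm]
    exact mul_le_mul_of_nonneg_left hCn (cGamma_pos hγ0).le

theorem exists_holder_le (hγ1 : 1 < γ) (hγ2 : γ < 2) (Φl Φr : ℝ) :
    ∃ K, 0 ≤ K ∧ ∀ n ≥ 3, ∀ ψ, IsDiscreteProfile γ Φl Φr n ψ →
      ∀ a ∈ Finset.Icc 1 (n - 1), ∀ b ∈ Finset.Icc 1 (n - 1),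
        |ψ a - ψ b| ≤ K * (|(a : ℝ) - b| / n) ^ ((γ - 1) / 2) := by
  obtain ⟨C, hC⟩ := exists_energy_le hγ1 hγ2 Φl Φr
  obtain ⟨K, hK0, hK⟩ := exists_holder_le_sqrt_discreteForm hγ1
  refine ⟨K * √C, by positivity, fun n hn ψ hψ a ha b hb => ?_⟩
  have hn0 : (0 : ℝ) < n := by exact_mod_cast (show 0 < n by omega)
  have hscale : √((n : ℝ) ^ (γ - 1) * discreteForm γ n ψ ψ)
      = (n : ℝ) ^ ((γ - 1) / 2) * √(discreteForm γ n ψ ψ) := by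
    rw [Real.sqrt_mul (by positivity), Real.sqrt_eq_rpow, ← Real.rpow_mul hn0.le, mul_one_div]
  calc |ψ a - ψ b| ≤ K * √(discreteForm γ n ψ ψ) * |(a : ℝ) - b| ^ ((γ - 1) / 2) :=
        hK n ψ a ha b hb
    _ = K * √((n : ℝ) ^ (γ - 1) * discreteForm γ n ψ ψ)
          * (|(a : ℝ) - b| / n) ^ ((γ - 1) / 2) := by
        rw [hscale, Real.div_rpow (abs_nonneg _) hn0.le]
        field_simp
    _ ≤ K * √C * (|(a : ℝ) - b| / n) ^ ((γ - 1) / 2) := by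
        gcongr
        exact (hC n hn ψ hψ).1

theorem exists_abs_le (hγ1 : 1 < γ) (hγ2 : γ < 2) (Φl Φr : ℝ) :
    ∃ M, ∀ n ≥ 3, ∀ ψ, IsDiscreteProfile γ Φl Φr n ψ →
      ∀ a ∈ Finset.Icc 1 (n - 1), |ψ a| ≤ M := by
  obtain ⟨C, hC⟩ := exists_energy_le hγ1 hγ2 Φl Φr
  obtain ⟨K, hK0, hK⟩ := exists_holder_le hγ1 hγ2 Φl Φr
  refine ⟨K + √C + |Φl|, fun n hn ψ hψ a ha => ?_⟩
  have hn1 : (1 : ℝ) ≤ n := by exact_mod_cast (show 1 ≤ n by omega)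
  have hfirst : |ψ 1 - Φl| ≤ √C := Real.abs_le_sqrt <|
    calc (ψ 1 - Φl) ^ 2 ≤ (ψ 1 - Φl) ^ 2 + (ψ (n - 1) - Φr) ^ 2 := by
          linarith [sq_nonneg (ψ (n - 1) - Φr)]
      _ ≤ (n : ℝ) ^ (γ - 1) * ((ψ 1 - Φl) ^ 2 + (ψ (n - 1) - Φr) ^ 2) :=
          le_mul_of_one_le_left (by positivity) (Real.one_le_rpow hn1 (by linarith))
      _ ≤ C := (hC n hn ψ hψ).2
  have hosc : |ψ a - ψ 1| ≤ K := by
    refine (hK n hn ψ hψ a ha 1 (Finset.mem_Icc.mpr (by omega))).trans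
      (mul_le_of_le_one_right hK0 (Real.rpow_le_one (by positivity) ?_ (by linarith)))
    obtain ⟨ha1, han⟩ := Finset.mem_Icc.mp ha
    have ha1' : (1 : ℝ) ≤ a := by exact_mod_cast ha1
    have han' : (a : ℝ) ≤ n := by exact_mod_cast (show a ≤ n by omega)
    rw [div_le_one (by linarith), abs_le]
    push_cast
    constructor <;> linarith
  calc |ψ a| = |(ψ a - ψ 1) + (ψ 1 - Φl) + Φl| := by congr 1; ring
    _ ≤ |ψ a - ψ 1| + |ψ 1 - Φl| + |Φl| := abs_add_three _ _ _
    _ ≤ K + √C + |Φl| := by gcongr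

end IsDiscreteProfile

/-! ### Passage to the limit -/

/-- The index in `Λ_n = {1, …, n - 1}` of the grid cell containing `u`. Truncating to `Λ_n` makes
it total: points of the cell of `0`, or outside the unit interval, get the nearest index. -/
def cellIndex (n : ℕ) (u : ℝ) : ℕ := max 1 (min (n - 1) ⌊n * u⌋₊)

lemma cellIndex_mem {n : ℕ} (hn : 2 ≤ n) (u : ℝ) : cellIndex n u ∈ Finset.Icc 1 (n - 1) := by
  rw [Finset.mem_Icc, cellIndex]
  omega

lemma cellIndex_zero {n : ℕ} : cellIndex n 0 = 1 := by simp [cellIndex]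

lemma cellIndex_one {n : ℕ} (hn : 2 ≤ n) : cellIndex n 1 = n - 1 := by
  rw [cellIndex, mul_one, Nat.floor_natCast]
  omega

lemma natFloor_mul_lt {n : ℕ} (hn : n ≠ 0) {u : ℝ} (hu : u < 1) : ⌊n * u⌋₊ < n :=
  Nat.floor_lt' hn |>.mpr (mul_lt_of_lt_one_right (by positivity) hu)

lemma cellIndex_eq_natFloor {n : ℕ} {u : ℝ} (hu : u < 1) (hfloor : 1 ≤ ⌊n * u⌋₊) :
    cellIndex n u = ⌊n * u⌋₊ := by
  have hn : n ≠ 0 := by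
    rintro rfl
    simp at hfloor
  have := natFloor_mul_lt hn hu
  rw [cellIndex]
  omega

lemma abs_natFloor_sub_natFloor_le (x y : ℝ) : |(⌊x⌋₊ : ℝ) - ⌊y⌋₊| ≤ |x - y| + 1 := by
  have key (x y : ℝ) : (⌊x⌋₊ : ℝ) ≤ ⌊y⌋₊ + (|x - y| + 1) := by
    rcases le_total 0 x with hx | hx
    · linarith [Nat.floor_le hx, Nat.lt_floor_add_one y, le_abs_self (x - y)]
    · rw [Nat.floor_of_nonpos hx, Nat.cast_zero]
      positivity
  have := key y x
  rw [abs_sub_comm] at this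
  exact abs_sub_le_iff.mpr ⟨by linarith [key x y], by linarith⟩

lemma abs_cellIndex_sub_le {n : ℕ} (hn : n ≠ 0) (u v : ℝ) :
    |(cellIndex n u : ℝ) - cellIndex n v| / n ≤ |u - v| + 1 / n := by
  have hn0 : (0 : ℝ) < n := by positivity
  rw [div_le_iff₀ hn0, add_mul, one_div_mul_cancel hn0.ne']
  calc |(cellIndex n u : ℝ) - cellIndex n v| ≤ |(⌊n * u⌋₊ : ℝ) - ⌊n * v⌋₊| := by
        simp only [cellIndex, Nat.cast_max, Nat.cast_min]
        exact (abs_max_sub_max_le_max _ _ _ _).trans (max_le (by simp)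
          ((abs_min_sub_min_le_max _ _ _ _).trans (max_le (by simp) le_rfl)))
    _ ≤ |n * u - n * v| + 1 := abs_natFloor_sub_natFloor_le _ _
    _ = |u - v| * n + 1 := by rw [← mul_sub, abs_mul, Nat.abs_cast, mul_comm]

section Limit

variable {N : ℕ → ℕ} {a : ℕ → ℕ → ℝ} {f : ℝ → ℝ}

lemma tendsto_natFloor_mul_div (hN : Tendsto N atTop atTop) {u : ℝ} (hu : 0 ≤ u) :
    Tendsto (fun j => (⌊N j * u⌋₊ : ℝ) / N j) atTop (𝓝 u) := by
  have h := (tendsto_nat_floor_mul_div_atTop hu).comp (tendsto_natCast_atTop_atTop.comp hN)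
  simpa only [Function.comp_def, mul_comm] using h

lemma eventually_one_le_natFloor_mul (hN : Tendsto N atTop atTop) {u : ℝ} (hu : 0 < u) :
    ∀ᶠ j in atTop, 1 ≤ ⌊N j * u⌋₊ := by
  have h : Tendsto (fun j => (N j : ℝ) * u) atTop atTop :=
    (tendsto_natCast_atTop_atTop.comp hN).atTop_mul_const hu
  exact (tendsto_nat_floor_atTop.comp h).eventually_ge_atTop 1

lemma tendsto_natFloor_of_tendsto_cellIndex (hN : Tendsto N atTop atTop) {u c : ℝ}
    (hu : u ∈ Ioo (0 : ℝ) 1) (h : Tendsto (fun j => a j (cellIndex (N j) u)) atTop (𝓝 c)) :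
    Tendsto (fun j => a j ⌊N j * u⌋₊) atTop (𝓝 c) := by
  refine h.congr' ?_
  filter_upwards [eventually_one_le_natFloor_mul hN hu.1] with j hj
  rw [cellIndex_eq_natFloor hu.2 hj]

lemma tendsto_stepGrad (γ : ℝ) (hN : Tendsto N atTop atTop) {p : ℝ × ℝ} (hp1 : 0 < p.1)
    (hp2 : 0 < p.2) (hne : p.1 ≠ p.2)
    (h1 : Tendsto (fun j => a j ⌊N j * p.1⌋₊) atTop (𝓝 (f p.1)))
    (h2 : Tendsto (fun j => a j ⌊N j * p.2⌋₊) atTop (𝓝 (f p.2))) :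
    Tendsto (fun j => stepGrad γ (N j) (a j) p) atTop (𝓝 (fracGrad γ f p)) := by
  have hdist : Tendsto (fun j => ((⌊N j * p.1⌋₊ : ℝ) - ⌊N j * p.2⌋₊) / N j) atTop
      (𝓝 (p.1 - p.2)) := by
    simp only [_root_.sub_div]
    exact (tendsto_natFloor_mul_div hN hp1.le).sub (tendsto_natFloor_mul_div hN hp2.le)
  have hkernel := (continuousAt_halfKernel γ (sub_ne_zero.mpr hne)).tendsto.comp hdist
  refine ((h1.sub h2).mul hkernel).congr' ?_
  filter_upwards [eventually_one_le_natFloor_mul hN hp1, eventually_one_le_natFloor_mul hN hp2]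
    with j hj1 hj2
  rw [stepGrad, gridGrad, if_pos ⟨hj1, hj2⟩]
  rfl

lemma ae_unitMeasure_mem_Ioo : ∀ᵐ u ∂unitMeasure, u ∈ Ioo (0 : ℝ) 1 := by
  rw [unitMeasure, ← restrict_Ioo_eq_restrict_Icc]
  exact ae_restrict_mem measurableSet_Ioo

lemma ae_squareMeasure_ne : ∀ᵐ p ∂squareMeasure, p.1 ≠ p.2 := by
  have hdiag : MeasurableSet {p : ℝ × ℝ | p.1 ≠ p.2} :=
    (measurableSet_eq_fun measurable_fst measurable_snd).compl
  refine (Measure.ae_prod_mem_iff_ae_ae_mem hdiag).mpr (.of_forall fun u => ?_)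
  filter_upwards [Measure.ae_ne unitMeasure u] with v hv using hv.symm

lemma ae_tendsto_stepGrad (γ : ℝ) (hN : Tendsto N atTop atTop)
    (h : ∀ u ∈ Ioo (0 : ℝ) 1, Tendsto (fun j => a j ⌊N j * u⌋₊) atTop (𝓝 (f u))) :
    ∀ᵐ p ∂squareMeasure,
      Tendsto (fun j => stepGrad γ (N j) (a j) p) atTop (𝓝 (fracGrad γ f p)) := by
  filter_upwards [Measure.quasiMeasurePreserving_fst.ae ae_unitMeasure_mem_Ioo,
    Measure.quasiMeasurePreserving_snd.ae ae_unitMeasure_mem_Ioo, ae_squareMeasure_ne]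
    with p hp1 hp2 hne
  exact tendsto_stepGrad γ hN hp1.1 hp2.1 hne (h _ hp1) (h _ hp2)

lemma eLpNorm_stepGrad_le {γ C : ℝ} {n : ℕ} (hn : n ≠ 0) {a : ℕ → ℝ}
    (hC : (n : ℝ) ^ (γ - 1) * discreteForm γ n a a ≤ C) :
    eLpNorm (stepGrad γ n a) 2 squareMeasure ≤ (√C).toNNReal := by
  have hL2 : MemLp (stepGrad γ n a) 2 squareMeasure := by
    rw [memLp_two_iff_integrable_sq (measurable_stepGrad γ n a).aestronglyMeasurable]
    simpa only [sq] using integrable_stepGrad_mul_stepGrad γ n a a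
  rw [hL2.eLpNorm_eq_integral_rpow_norm two_ne_zero ofNat_ne_top]
  refine ENNReal.ofReal_le_ofReal ?_
  simp only [toReal_ofNat, Real.rpow_ofNat, Real.norm_eq_abs, sq, abs_mul_abs_self]
  rw [integral_stepGrad_mul_stepGrad hn, ← one_div, ← Real.sqrt_eq_rpow]
  exact Real.sqrt_le_sqrt hC

lemma memLp_fracGrad_of_tendsto {γ C : ℝ} (hN : Tendsto N atTop atTop) (hN0 : ∀ j, N j ≠ 0)
    (hC : ∀ j, (N j : ℝ) ^ (γ - 1) * discreteForm γ (N j) (a j) (a j) ≤ C)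
    (h : ∀ u ∈ Ioo (0 : ℝ) 1, Tendsto (fun j => a j ⌊N j * u⌋₊) atTop (𝓝 (f u))) :
    MemLp (fracGrad γ f) 2 squareMeasure := by
  have hmeas (j : ℕ) : AEStronglyMeasurable (stepGrad γ (N j) (a j)) squareMeasure :=
    (measurable_stepGrad γ (N j) (a j)).aestronglyMeasurable
  have hlim := ae_tendsto_stepGrad γ hN h
  refine ⟨aestronglyMeasurable_of_tendsto_ae atTop hmeas hlim, ?_⟩
  exact (Lp.eLpNorm_le_of_ae_tendsto (.of_forall fun j => eLpNorm_stepGrad_le (hN0 j) (hC j)) hmeas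
    hlim).trans_lt coe_lt_top

lemma tendsto_discreteForm_of_lipschitzWith {γ C : ℝ} (hγ1 : 1 < γ) (hγ2 : γ < 2)
    (hN : Tendsto N atTop atTop) (hN0 : ∀ j, N j ≠ 0)
    (hC : ∀ j, (N j : ℝ) ^ (γ - 1) * discreteForm γ (N j) (a j) (a j) ≤ C)
    (h : ∀ u ∈ Ioo (0 : ℝ) 1, Tendsto (fun j => a j ⌊N j * u⌋₊) atTop (𝓝 (f u)))
    {L : ℝ≥0} {φ : ℝ → ℝ} (hφ : LipschitzWith L φ) :
    Tendsto (fun j => (N j : ℝ) ^ (γ - 1) * discreteForm γ (N j) (a j) fun x => φ (x / N j)) atTop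
      (𝓝 (∫ p, fracGrad γ f p * fracGrad γ φ p ∂squareMeasure)) := by
  simp only [← integral_stepGrad_mul_stepGrad (hN0 _)]
  refine tendsto_integral_mul_of_dominated (p := 2) (q := 2) ofNat_ne_top
    (fun j => (measurable_stepGrad γ _ _).aestronglyMeasurable)
    (fun j => (measurable_stepGrad γ _ _).aestronglyMeasurable)
    (fun j => eLpNorm_stepGrad_le (hN0 j) (hC j))
    ((memLp_abs_sub_rpow_half hγ2).const_mul (L * 2 ^ (-((1 - γ) / 2))))
    (fun j => ?_) (ae_tendsto_stepGrad γ hN h)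
    (ae_tendsto_stepGrad γ hN fun u hu =>
      (hφ.continuous.tendsto u).comp (tendsto_natFloor_mul_div hN hu.1.le))
  filter_upwards [ae_squareMeasure_mem] with p hp
  exact abs_stepGrad_le hγ1 hφ (hN0 j) hp.1.1 hp.2.1

lemma IsSpatialTest.eventually_eq_zero_first_last {φ : ℝ → ℝ} (hφ : IsSpatialTest φ) :
    ∀ᶠ n : ℕ in atTop, φ ((1 : ℕ) / n) = 0 ∧ φ ((n - 1 : ℕ) / n) = 0 := by
  obtain ⟨η, hη, hsupp⟩ := hφ.exists_tsupport_subset_Icc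
  have hzero {u : ℝ} (hu : u ∉ Icc η (1 - η)) : φ u = 0 :=
    image_eq_zero_of_notMem_tsupport fun h => hu (hsupp h)
  filter_upwards [tendsto_one_div_atTop_nhds_zero_nat.eventually_lt_const hη, eventually_ge_atTop 1]
    with n hn hn1
  have hn0 : (n : ℝ) ≠ 0 := by positivity
  refine ⟨hzero fun h => ?_, hzero fun h => ?_⟩
  · linarith [h.1, Nat.cast_one (R := ℝ)]
  · have := h.2
    rw [Nat.cast_sub hn1, _root_.sub_div, div_self hn0, Nat.cast_one] at this
    linarith

theorem isFracHarmonic_of_tendsto {γ Φl Φr C : ℝ} (hγ1 : 1 < γ) (hγ2 : γ < 2)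
    (hN : Tendsto N atTop atTop) (hN2 : ∀ j, 2 ≤ N j)
    (ha : ∀ j, IsDiscreteProfile γ Φl Φr (N j) (a j))
    (hC : ∀ j, (N j : ℝ) ^ (γ - 1) * discreteForm γ (N j) (a j) (a j) ≤ C)
    (h : ∀ u ∈ Ioo (0 : ℝ) 1, Tendsto (fun j => a j ⌊N j * u⌋₊) atTop (𝓝 (f u))) :
    IsFracHarmonic γ f := by
  have hN0 (j : ℕ) : N j ≠ 0 := by have := hN2 j; omega
  have hγ0 : 0 < γ := by linarith
  refine ⟨memLp_fracGrad_of_tendsto hN hN0 hC h, fun φ hφ => ?_⟩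
  obtain ⟨L, hL⟩ := hφ.exists_lipschitzWith
  refine tendsto_nhds_unique
    (tendsto_discreteForm_of_lipschitzWith hγ1 hγ2 hN hN0 hC h hL) ?_
  refine tendsto_const_nhds.congr' ?_
  filter_upwards [hN.eventually hφ.eventually_eq_zero_first_last] with j ⟨hfirst, hlast⟩
  have htest := (ha j).cGamma_mul_discreteForm hγ0 (hN2 j) fun x => φ (x / N j)
  rw [hfirst, hlast, zero_mul, zero_mul, add_zero, mul_zero] at htest
  rw [(mul_eq_zero.mp htest).resolve_left (cGamma_pos hγ0).ne', mul_zero]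

lemma tendsto_of_rpow_mul_sq_le (hN : Tendsto N atTop atTop) {δ C c : ℝ} (hδ : 0 < δ)
    {t : ℕ → ℝ} (h : ∀ j, (N j : ℝ) ^ δ * (t j - c) ^ 2 ≤ C) : Tendsto t atTop (𝓝 c) := by
  have hpow : Tendsto (fun j => (N j : ℝ) ^ δ) atTop atTop :=
    (_root_.tendsto_rpow_atTop hδ).comp (tendsto_natCast_atTop_atTop.comp hN)
  have hsq : Tendsto (fun j => (t j - c) ^ 2) atTop (𝓝 0) := by
    refine squeeze_zero' (.of_forall fun j => sq_nonneg _) ?_ (hpow.const_div_atTop C)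
    filter_upwards [hpow.eventually_gt_atTop 0] with j hj
    rw [le_div_iff₀ hj, mul_comm]
    exact h j
  have habs := hsq.sqrt
  simp only [Real.sqrt_sq_eq_abs, Real.sqrt_zero] at habs
  rwa [tendsto_iff_dist_tendsto_zero]

theorem tendsto_riemannSum_mul (hN : Tendsto N atTop atTop) (hN0 : ∀ j, N j ≠ 0) {M : ℝ}
    (hM : ∀ j, ∀ x ∈ Finset.Icc 1 (N j - 1), |a j x| ≤ M)
    (h : ∀ u ∈ Ioo (0 : ℝ) 1, Tendsto (fun j => a j ⌊N j * u⌋₊) atTop (𝓝 (f u)))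
    {G : ℝ → ℝ} (hG : ContinuousOn G (Icc 0 1)) :
    Tendsto (fun j => (1 / N j : ℝ) * ∑ x ∈ Finset.Icc 1 (N j - 1), G (x / N j) * a j x) atTop
      (𝓝 (∫ u, G u * f u ∂unitMeasure)) := by
  obtain ⟨B, hB⟩ := isCompact_Icc.exists_bound_of_continuousOn hG
  have hB0 : 0 ≤ B := (norm_nonneg _).trans (hB 0 (left_mem_Icc.mpr zero_le_one))
  set H : ℕ → ℕ → ℝ := fun j => fun x => if 1 ≤ x then G (x / N j) * a j x else 0 with hH
  have hsum (j : ℕ) : (1 / N j : ℝ) * ∑ x ∈ Finset.Icc 1 (N j - 1), G (x / N j) * a j x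
      = ∫ u, H j ⌊N j * u⌋₊ ∂unitMeasure := by
    rw [integral_natFloor_mul (hN0 j) (H j), sum_range_eq_sum_Icc (by simp [hH])]
    congr 1
    exact Finset.sum_congr rfl fun x hx => (if_pos (Finset.mem_Icc.mp hx).1).symm
  simp only [hsum]
  refine tendsto_integral_of_dominated_convergence (fun _ => B * |M|) (fun j => ?_)
    (integrable_const _) (fun j => ?_) ?_
  · exact (measurable_of_countable (H j)).comp (by fun_prop) |>.aestronglyMeasurable
  · filter_upwards [ae_unitMeasure_mem_Ioo] with u hu
    simp only [hH]
    split_ifs with hfloor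
    · have hlt := natFloor_mul_lt (hN0 j) hu.2
      have hcell : (⌊N j * u⌋₊ : ℝ) / N j ∈ Icc (0 : ℝ) 1 :=
        ⟨by positivity, div_le_one_of_le₀ (by exact_mod_cast hlt.le) (by positivity)⟩
      rw [norm_mul]
      exact mul_le_mul (hB _ hcell)
        ((hM j _ (Finset.mem_Icc.mpr (by omega))).trans (le_abs_self M)) (norm_nonneg _) hB0
    · rw [norm_zero]
      positivity
  · filter_upwards [ae_unitMeasure_mem_Ioo] with u hu
    have hGu := (hG.continuousAt (Icc_mem_nhds hu.1 hu.2)).tendsto.comp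
      (tendsto_natFloor_mul_div hN hu.1.le)
    refine (hGu.mul (h u hu)).congr' ?_
    filter_upwards [eventually_one_le_natFloor_mul hN hu.1] with j hj
    exact (if_pos hj).symm

end Limit

/-! ### The stationary solution -/

lemma memLp_fracGrad_of_memHgamma {γ : ℝ} (hγ : 0 < γ) {F : ℝ → ℝ} (hF : MemHgamma γ F) :
    MemLp (fracGrad γ F) 2 squareMeasure := by
  obtain ⟨hmeas, hsob⟩ := hF
  have hc := cGamma_pos hγ
  have hfin : fracSeminormSq γ F < ⊤ := le_add_self.trans_lt hsob
  rw [fracSeminormSq, lintegral_lintegral (Measurable.aemeasurable (by fun_prop))] at hfin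
  have hL2 : MemLp (fun p => √(cGamma γ / 2) * fracGrad γ F p) 2 squareMeasure := by
    have hgrad : Measurable fun p => √(cGamma γ / 2) * fracGrad γ F p := by fun_prop
    rw [memLp_two_iff_integrable_sq hgrad.aestronglyMeasurable]
    refine ⟨(hgrad.pow_const 2).aestronglyMeasurable, ?_⟩
    rw [hasFiniteIntegral_iff_ofReal (.of_forall fun p => sq_nonneg _)]
    refine lt_of_eq_of_lt (lintegral_congr fun p => ?_) hfin
    rw [mul_pow, Real.sq_sqrt (by positivity), sq (fracGrad γ F p), fracGrad_mul_fracGrad]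
    ring_nf
  have hscale : √(cGamma γ / 2) ≠ 0 := by positivity
  simpa only [inv_mul_cancel_left₀ hscale] using hL2.const_mul (√(cGamma γ / 2))⁻¹

theorem IsStationarySolution.exists_isFracHarmonic {γ Φl Φr : ℝ} (hγ0 : 0 < γ) (hγ2 : γ < 2)
    {Φss : ℝ → ℝ} (hss : IsStationarySolution γ Φl Φr Φss) :
    ∃ F : ℝ → ℝ, ContinuousOn F (Icc 0 1) ∧ F 0 = Φl ∧ F 1 = Φr ∧ Φss =ᵐ[unitMeasure] F ∧
      IsFracHarmonic γ F := by
  obtain ⟨hmem, ⟨Fc, hFc, hae, hFc0, hFc1⟩, horth⟩ := hss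
  set F : ℝ → ℝ := IccExtend zero_le_one ((Icc 0 1).domRestrict Fc)
  have hFcont : Continuous F := hFc.domRestrict.Icc_extend'
  have hFFc : EqOn F Fc (Icc 0 1) := fun u hu => IccExtend_of_mem _ _ hu
  have haeF : Φss =ᵐ[unitMeasure] F := by
    filter_upwards [hae, ae_restrict_mem measurableSet_Icc] with u hu hu01
    rw [hu, hFFc hu01]
  obtain ⟨M, hM⟩ := isCompact_Icc.exists_bound_of_continuousOn hFc
  have hFM (u : ℝ) : |F u| ≤ M := hM _ (projIcc 0 1 zero_le_one u).2
  have hE : MemLp (fracGrad γ F) 2 squareMeasure := by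
    refine (memLp_fracGrad_of_memHgamma hγ0 hmem).ae_eq ?_
    filter_upwards [Measure.quasiMeasurePreserving_fst.ae haeF,
      Measure.quasiMeasurePreserving_snd.ae haeF] with p hp1 hp2
    rw [fracGrad, fracGrad, hp1, hp2]
  refine ⟨F, hFcont.continuousOn, ?_, ?_, haeF, hE, fun φ hφ => ?_⟩
  · rw [hFFc (left_mem_Icc.mpr zero_le_one), hFc0]
  · rw [hFFc (right_mem_Icc.mpr zero_le_one), hFc1]
  · have hweak : ∫ u, F u * fracLap γ φ u ∂unitMeasure = 0 := by
      rw [← horth φ hφ]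
      exact integral_congr_ae (haeF.mono fun u hu => by simp only [hu])
    rw [integral_mul_fracLap hγ0 hγ2 hFcont.measurable hFM hE hφ] at hweak
    exact (mul_eq_zero.mp hweak).resolve_left (by linarith [cGamma_pos hγ0])

/-! ### Convergence of the discrete profiles -/

theorem IsDiscreteProfile.exists_subseq_tendsto {γ Φl Φr : ℝ} (hγ1 : 1 < γ) (hγ2 : γ < 2)
    {N : ℕ → ℕ} (hN : Tendsto N atTop atTop) (hN3 : ∀ j, 3 ≤ N j) {a : ℕ → ℕ → ℝ}
    (ha : ∀ j, IsDiscreteProfile γ Φl Φr (N j) (a j)) :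
    ∃ θ : ℕ → ℕ, StrictMono θ ∧ ∃ f : ℝ → ℝ, Continuous f ∧
      ∀ u, Tendsto (fun j => a (θ j) (cellIndex (N (θ j)) u)) atTop (𝓝 (f u)) := by
  obtain ⟨K, hK0, hK⟩ := exists_holder_le hγ1 hγ2 Φl Φr
  obtain ⟨M, hM⟩ := exists_abs_le hγ1 hγ2 Φl Φr
  have hmem (j : ℕ) (u : ℝ) : cellIndex (N j) u ∈ Finset.Icc 1 (N j - 1) :=
    cellIndex_mem (by have := hN3 j; omega) u
  have hequi : AsymptoticallyEquicontinuous fun j u => a j (cellIndex (N j) u) := by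
    refine asymptoticallyEquicontinuous_of_abs_sub_le (α := (γ - 1) / 2)
      (r := fun j => 1 / (N j : ℝ)) (by linarith) hK0 (fun j => by positivity)
      (tendsto_one_div_atTop_nhds_zero_nat.comp hN) fun j u v => ?_
    refine (hK _ (hN3 j) _ (ha j) _ (hmem j u) _ (hmem j v)).trans ?_
    have hdist := abs_cellIndex_sub_le (n := N j) (by have := hN3 j; omega) u v
    gcongr
  obtain ⟨θ, hθ, f, hf, hlim⟩ := hequi.exists_subseq_tendsto isCompact_Icc
    fun j u => abs_le.mp (hM _ (hN3 j) _ (ha j) _ (hmem j u))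
  exact ⟨θ, hθ, f, hf.continuous, hlim⟩

theorem IsDiscreteProfile.eq_boundary_of_tendsto {γ Φl Φr : ℝ} (hγ1 : 1 < γ) (hγ2 : γ < 2)
    {N : ℕ → ℕ} (hN : Tendsto N atTop atTop) (hN3 : ∀ j, 3 ≤ N j) {a : ℕ → ℕ → ℝ}
    (ha : ∀ j, IsDiscreteProfile γ Φl Φr (N j) (a j)) {f : ℝ → ℝ}
    (h : ∀ u, Tendsto (fun j => a j (cellIndex (N j) u)) atTop (𝓝 (f u))) :
    f 0 = Φl ∧ f 1 = Φr := by
  obtain ⟨C, hC⟩ := exists_energy_le hγ1 hγ2 Φl Φr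
  have hδ : 0 < γ - 1 := by linarith
  have hbound (j : ℕ) := (hC _ (hN3 j) _ (ha j)).2
  have hpow (j : ℕ) : 0 ≤ (N j : ℝ) ^ (γ - 1) := by positivity
  have hright (j : ℕ) : cellIndex (N j) 1 = N j - 1 := cellIndex_one (by have := hN3 j; omega)
  constructor
  · refine tendsto_nhds_unique (h 0) (tendsto_of_rpow_mul_sq_le hN hδ (C := C) fun j => ?_)
    rw [cellIndex_zero]
    exact (mul_le_mul_of_nonneg_left (le_add_of_nonneg_right (sq_nonneg _)) (hpow j)).trans
      (hbound j)
  · refine tendsto_nhds_unique (h 1) (tendsto_of_rpow_mul_sq_le hN hδ (C := C) fun j => ?_)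
    rw [hright j]
    exact (mul_le_mul_of_nonneg_left (le_add_of_nonneg_left (sq_nonneg _)) (hpow j)).trans
      (hbound j)

theorem IsDiscreteProfile.eqOn_of_tendsto {γ Φl Φr : ℝ} (hγ1 : 1 < γ) (hγ2 : γ < 2)
    {N : ℕ → ℕ} (hN : Tendsto N atTop atTop) (hN3 : ∀ j, 3 ≤ N j) {a : ℕ → ℕ → ℝ}
    (ha : ∀ j, IsDiscreteProfile γ Φl Φr (N j) (a j)) {f F : ℝ → ℝ}
    (hf : ContinuousOn f (Icc 0 1))
    (h : ∀ u, Tendsto (fun j => a j (cellIndex (N j) u)) atTop (𝓝 (f u)))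
    (hF : ContinuousOn F (Icc 0 1)) (hF0 : F 0 = Φl) (hF1 : F 1 = Φr)
    (hharm : IsFracHarmonic γ F) : EqOn f F (Icc 0 1) := by
  obtain ⟨C, hC⟩ := exists_energy_le hγ1 hγ2 Φl Φr
  obtain ⟨hf0, hf1⟩ := eq_boundary_of_tendsto hγ1 hγ2 hN hN3 ha h
  have hfharm : IsFracHarmonic γ f :=
    isFracHarmonic_of_tendsto hγ1 hγ2 hN (fun j => by have := hN3 j; omega) ha
      (fun j => (hC _ (hN3 j) _ (ha j)).1)
      fun u hu => tendsto_natFloor_of_tendsto_cellIndex hN hu (h u)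
  exact hfharm.eqOn (by linarith) hγ2 hharm hf hF (hf0.trans hF0.symm) (hf1.trans hF1.symm)

/-- Convergence of the discrete stationary profiles to the stationary
solution of the fractional Dirichlet problem, tested against continuous functions. -/
theorem discrete_profile_converges_to_stationary_profile
    (γ Φl Φr : ℝ) (hγ : γ ∈ Set.Ioo (1:ℝ) 2)
    (ψ : ℕ → ℕ → ℝ) (hψ : ∀ n : ℕ, 2 ≤ n → IsDiscreteProfile γ Φl Φr n (ψ n))
    (Φss : ℝ → ℝ) (hss : IsStationarySolution γ Φl Φr Φss)
    (G : ℝ → ℝ) (hG : ContinuousOn G (Set.Icc 0 1)) :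
    Tendsto (fun n : ℕ =>
        (1 / (n : ℝ)) * ∑ x ∈ Finset.Icc 1 (n - 1), G ((x : ℝ) / (n : ℝ)) * ψ n x)
      atTop (nhds (∫ u in Set.Icc (0:ℝ) 1, G u * Φss u)) := by
  obtain ⟨hγ1, hγ2⟩ := hγ
  obtain ⟨F, hF, hF0, hF1, hΦF, hharm⟩ := hss.exists_isFracHarmonic (by linarith) hγ2
  obtain ⟨M, hM⟩ := IsDiscreteProfile.exists_abs_le hγ1 hγ2 Φl Φr
  rw [← tendsto_add_atTop_iff_nat 3]
  refine tendsto_of_subseq_tendsto fun ns hns => ?_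
  have hprofile (n : ℕ) : IsDiscreteProfile γ Φl Φr (n + 3) (ψ (n + 3)) := hψ _ (by omega)
  obtain ⟨θ, hθ, f, hf, hlim⟩ := IsDiscreteProfile.exists_subseq_tendsto hγ1 hγ2
    ((tendsto_add_atTop_nat 3).comp hns) (fun _ => by simp) fun j => hprofile (ns j)
  have hN : Tendsto (fun j => ns (θ j) + 3) atTop atTop :=
    (tendsto_add_atTop_nat 3).comp (hns.comp hθ.tendsto_atTop)
  have hfF : EqOn f F (Icc 0 1) := IsDiscreteProfile.eqOn_of_tendsto hγ1 hγ2 hN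
    (fun _ => by simp) (fun _ => hprofile _) hf.continuousOn hlim hF hF0 hF1 hharm
  have hint : ∫ u in Icc 0 1, G u * f u = ∫ u in Icc 0 1, G u * Φss u := by
    refine integral_congr_ae ?_
    filter_upwards [hΦF, ae_restrict_mem measurableSet_Icc] with u hu hu01
    rw [hu, hfF hu01]
  rw [← hint]
  exact ⟨θ, tendsto_riemannSum_mul hN (fun _ => by simp) (fun _ => hM _ (by simp) _ (hprofile _))
    (fun u hu => tendsto_natFloor_of_tendsto_cellIndex hN hu (hlim u)) hG⟩
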